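/- arXiv:1808.04763 — 2 statements merged into one kernel-verified Lean document; each statement's English description precedes it below -/
import Mathlib

section
/- Let u : ℝ × [0,1] → ℂ be a (sufficiently regular) 2π-periodic-in-space solution of ∂ₜu = i(∂ₓₓu + V(x,t)u), where V is a 2π-periodic-in-space bounded complex potential with |V| ≤ L, and assume ∫_{[0,2π]} |u(x,0)|² dx = c₀² and sup_{0≤t≤1} ∫_{[0,2π]}(|u(x,t)|² + |∂ₓu(x,t)|²) dx = A² < ∞. Then there exist a universal constant c₁ and t* > 0 (t* = min(256A/(c₀L), 2⁻¹⁴(c₀/A)⁴, 4π², 1/L²)) such that for every t with 0 < t < t*: (e^{c₁/t}/t) · ∫_{t/4}^{3t} ∫_{{y ∈ [0,2π] : dist(y + 2π s/t, 2πℤ) < 8π√t or dist(y − 2π s/t, 2πℤ) < 8π√t}} ( |u(y,s)|² + s|∂_y u(y,s)|² ) dy ds ≥ c₀². -/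
open MeasureTheory Real Set

noncomputable section

/-!
Translate a bump `χ` of width `√t` along the circle at speed `2π/t`. The weight
`Ψ(s, y) = ∫_{y + 2πs/t}^{y + 4π} χ` satisfies `∂ₛΨ = -(2π/t) χ(y + 2πs/t)`; while `s` runs through
`[t, 2t]` it decreases from the constant `∫χ` to `0`. Hence `∫χ · ‖u(t)‖²` is, up to the flux of
mass, the mass met by the moving bump; the flux is `O(A²)` per unit time because `|∂_yΨ| ≤ 1`, and
`∫χ ≥ 6√t` beats it for small `t`.

Since `u` is only separately regular, the difficulty is to differentiate `s ↦ ∫ Ψ|u|²`.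
Differentiation under the integral sign works at times where `u` is right-Lipschitz in `L²`. That
every time is such follows by a Looman–Menchoff argument: otherwise the Baire category theorem,
applied to the closed set of bad times, yields a portion of it on which `|∂ₜu|` is uniformly
bounded on a dense subset, and across the gaps of that portion the energy inequality propagates the
Lipschitz bound.
-/

open Filter Topology Asymptotics
open scoped ENNReal NNReal

local notation "𝕋" => Icc (0 : ℝ) (2 * π)

/-! ### Integrals under `L²` bounds -/

theorem one_div_toReal_sub_one_div_toReal_pos {p q : ℝ≥0∞} (hp : p ≠ 0) (hpq : p < q) :
    0 < 1 / p.toReal - 1 / q.toReal := by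
  have hp' : 0 < p.toReal := ENNReal.toReal_pos hp hpq.ne_top
  rcases eq_or_ne q ∞ with rfl | hq
  · simpa using hp'
  · exact sub_pos.2 (one_div_lt_one_div_of_lt hp' (ENNReal.toReal_strict_mono hq hpq))

section Vitali

variable {α E : Type*} [MeasurableSpace α] {μ : Measure α} [NormedAddCommGroup E]

theorem unifIntegrable_of_eLpNorm_le {ι : Type*} {f : ι → α → E} {p q : ℝ≥0∞} (hp : p ≠ 0)
    (hpq : p < q) {C : ℝ≥0} (hf : ∀ i, AEStronglyMeasurable (f i) μ)
    (hC : ∀ i, eLpNorm (f i) q μ ≤ C) : UnifIntegrable f p μ := by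
  intro ε hε
  set r : ℝ := 1 / p.toReal - 1 / q.toReal
  have hr : 0 < r := one_div_toReal_sub_one_div_toReal_pos hp hpq
  have hlim : Tendsto (fun δ : ℝ => C * ENNReal.ofReal δ ^ r) (𝓝[>] 0) (𝓝 0) := by
    have : Continuous fun δ : ℝ => C * ENNReal.ofReal δ ^ r :=
      (ENNReal.continuous_const_mul ENNReal.coe_ne_top).comp
        (ENNReal.continuous_rpow_const.comp ENNReal.continuous_ofReal)
    simpa [hr] using (this.tendsto 0).mono_left nhdsWithin_le_nhds
  obtain ⟨δ, hδε, hδ⟩ := ((hlim.eventually_le_const (ENNReal.ofReal_pos.2 hε)).and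
    self_mem_nhdsWithin).exists
  refine ⟨δ, hδ, fun i s hs hsδ => ?_⟩
  calc eLpNorm (s.indicator (f i)) p μ
      = eLpNorm (f i) p (μ.restrict s) := eLpNorm_indicator_eq_eLpNorm_restrict hs
    _ ≤ eLpNorm (f i) q (μ.restrict s) * μ.restrict s univ ^ r :=
        eLpNorm_le_eLpNorm_mul_rpow_measure_univ hpq.le (hf i).restrict
    _ ≤ C * ENNReal.ofReal δ ^ r := by
        rw [Measure.restrict_apply_univ]
        gcongr
        exact (eLpNorm_mono_measure _ Measure.restrict_le_self).trans (hC i)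
    _ ≤ ENNReal.ofReal ε := hδε

variable [NormedSpace ℝ E] [IsFiniteMeasure μ]

theorem tendsto_integral_of_eLpNorm_le {ι : Type*} {l : Filter ι} [l.IsCountablyGenerated]
    {f : ι → α → E} {g : α → E} {q : ℝ≥0∞} (hq : 1 < q) {C : ℝ≥0}
    (hf : ∀ᶠ i in l, AEStronglyMeasurable (f i) μ) (hC : ∀ᶠ i in l, eLpNorm (f i) q μ ≤ C)
    (hlim : ∀ᵐ x ∂μ, Tendsto (fun i => f i x) l (𝓝 (g x))) :
    Tendsto (fun i => ∫ x, f i x ∂μ) l (𝓝 (∫ x, g x ∂μ)) := by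
  refine tendsto_of_seq_tendsto fun i hi => ?_
  obtain ⟨N, hN⟩ := eventually_atTop.1 (hi.eventually (hf.and hC))
  rw [← tendsto_add_atTop_iff_nat N]
  set F : ℕ → α → E := fun n => f (i (n + N))
  have hF : ∀ n, AEStronglyMeasurable (F n) μ := fun n => (hN _ (Nat.le_add_left N n)).1
  have hFC : ∀ n, eLpNorm (F n) q μ ≤ C := fun n => (hN _ (Nat.le_add_left N n)).2
  have hFg : ∀ᵐ x ∂μ, Tendsto (fun n => F n x) atTop (𝓝 (g x)) := by
    filter_upwards [hlim] with x hx
    exact (hx.comp hi).comp (tendsto_add_atTop_nat N)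
  have hUI : UniformIntegrable F 1 μ := by
    refine ⟨hF, unifIntegrable_of_eLpNorm_le one_ne_zero hq hF hFC,
      C * (μ univ ^ (1 / (1 : ℝ≥0∞).toReal - 1 / q.toReal)).toNNReal, fun n => ?_⟩
    rw [ENNReal.coe_mul, ENNReal.coe_toNNReal]
    · exact (eLpNorm_le_eLpNorm_mul_rpow_measure_univ hq.le (hF n)).trans (by gcongr; exact hFC n)
    · exact ENNReal.rpow_ne_top_of_nonneg
        (one_div_toReal_sub_one_div_toReal_pos one_ne_zero hq).le (measure_ne_top μ univ)
  have hg : MemLp g 1 μ := hUI.memLp_of_ae_tendsto hFg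
  exact tendsto_integral_of_L1' g hg.1
    (Eventually.of_forall fun n => memLp_one_iff_integrable.1 (hUI.memLp n))
    (tendsto_Lp_finite_of_tendsto_ae le_rfl ENNReal.one_ne_top hF hg hUI.unifIntegrable hFg)

theorem hasDerivWithinAt_integral_of_lpNorm_isBigO {F : ℝ → α → E} {F' : α → E} {a : ℝ}
    (hFa : MemLp (F a) 2 μ) (hF : ∀ᶠ t in 𝓝[>] a, MemLp (F t) 2 μ)
    (hO : (fun t => lpNorm (F t - F a) 2 μ) =O[𝓝[>] a] fun t => t - a)
    (hd : ∀ᵐ x ∂μ, HasDerivWithinAt (F · x) (F' x) (Ioi a) a) :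
    HasDerivWithinAt (fun t => ∫ x, F t x ∂μ) (∫ x, F' x ∂μ) (Ioi a) a := by
  obtain ⟨C, -, hC⟩ := hO.exists_pos
  rw [hasDerivWithinAt_iff_tendsto_slope' self_notMem_Ioi]
  have hslope : Tendsto (fun t => ∫ x, slope (F · x) a t ∂μ) (𝓝[>] a) (𝓝 (∫ x, F' x ∂μ)) := by
    refine tendsto_integral_of_eLpNorm_le ENNReal.one_lt_two (C := C.toNNReal) ?_ ?_ ?_
    · filter_upwards [hF] with t ht
      exact ((ht.sub hFa).const_smul (t - a)⁻¹).1
    · filter_upwards [hF, hC.bound, self_mem_nhdsWithin] with t ht htC hat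
      have hat' : 0 < t - a := sub_pos.2 hat
      have hm : MemLp ((t - a)⁻¹ • (F t - F a)) 2 μ := (ht.sub hFa).const_smul _
      change eLpNorm ((t - a)⁻¹ • (F t - F a)) 2 μ ≤ ENNReal.ofReal C
      rw [← ofReal_lpNorm hm, lpNorm_const_smul]
      refine ENNReal.ofReal_le_ofReal ?_
      rw [Real.norm_of_nonneg lpNorm_nonneg, Real.norm_of_nonneg hat'.le] at htC
      rw [coe_nnnorm, norm_inv, Real.norm_of_nonneg hat'.le, inv_mul_le_iff₀ hat', mul_comm]
      exact htC
    · filter_upwards [hd] with x hx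
      exact (hasDerivWithinAt_iff_tendsto_slope' self_notMem_Ioi).1 hx
  refine hslope.congr' ?_
  filter_upwards [hF] with t ht
  simp only [slope_def_module]
  rw [integral_smul, integral_sub (ht.integrable one_le_two) (hFa.integrable one_le_two)]

end Vitali

section LpNorm

variable {α E : Type*} [MeasurableSpace α] {μ ν : Measure α} [NormedAddCommGroup E]
  {f : α → E} {p : ℝ≥0∞}

theorem lpNorm_mono_measure (hf : MemLp f p μ) (hνμ : ν ≤ μ) : lpNorm f p ν ≤ lpNorm f p μ := by
  rw [← toReal_eLpNorm hf.1, ← toReal_eLpNorm (hf.1.mono_measure hνμ)]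
  exact ENNReal.toReal_mono hf.2.ne (eLpNorm_mono_measure f hνμ)

theorem lpNorm_two_eq_sqrt_integral (hf : AEStronglyMeasurable f μ) :
    lpNorm f 2 μ = √(∫ x, ‖f x‖ ^ 2 ∂μ) := by
  simp [lpNorm_eq_integral_norm_rpow_toReal two_ne_zero ENNReal.ofNat_ne_top hf, sqrt_eq_rpow]

theorem integral_norm_le_sqrt_measureReal_mul_lpNorm_two [IsFiniteMeasure μ] (hf : MemLp f 2 μ) :
    ∫ x, ‖f x‖ ∂μ ≤ √(μ.real univ) * lpNorm f 2 μ := by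
  have h := eLpNorm_le_eLpNorm_mul_rpow_measure_univ (one_le_two : (1 : ℝ≥0∞) ≤ 2) hf.1
  rw [← lpNorm_one_eq_integral_norm hf.1, ← toReal_eLpNorm hf.1, ← toReal_eLpNorm hf.1,
    sqrt_eq_rpow, measureReal_def, ENNReal.toReal_rpow, mul_comm]
  norm_num at h ⊢
  rw [← ENNReal.toReal_mul]
  exact ENNReal.toReal_mono (ENNReal.mul_ne_top hf.2.ne (by simp)) h

theorem integral_norm_slope_sq [NormedSpace ℝ E] (F : ℝ → α → E) (c t : ℝ) :
    ∫ x, ‖slope (F · x) c t‖ ^ 2 ∂μ = ((t - c) ^ 2)⁻¹ * ∫ x, ‖(F t - F c) x‖ ^ 2 ∂μ := by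
  rw [← integral_const_mul]
  simp only [slope_def_module, norm_smul, norm_inv, mul_pow, inv_pow, norm_eq_abs, sq_abs,
    Pi.sub_apply]

theorem eventually_lpNorm_two_sub_le [NormedSpace ℝ E] [IsFiniteMeasure μ] {F : ℝ → α → E}
    {F' : α → E} {c m n K : ℝ} (hn : 0 ≤ n) (hK : √(μ.real univ) * n < K)
    (hFc : AEStronglyMeasurable (F c) μ) (hF : ∀ᶠ t in 𝓝[>] c, AEStronglyMeasurable (F t) μ)
    (hlip : ∀ᶠ t in 𝓝[>] c, ∀ᵐ x ∂μ, ‖F t x - F c x‖ ≤ m * (t - c))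
    (hd : ∀ᵐ x ∂μ, HasDerivWithinAt (F · x) (F' x) (Ioi c) c) (hF' : ∀ᵐ x ∂μ, ‖F' x‖ ≤ n) :
    ∀ᶠ t in 𝓝[>] c, lpNorm (F t - F c) 2 μ ≤ K * (t - c) := by
  have hlim : Tendsto (fun t => ∫ x, ‖slope (F · x) c t‖ ^ 2 ∂μ) (𝓝[>] c)
      (𝓝 (∫ x, ‖F' x‖ ^ 2 ∂μ)) := by
    refine tendsto_integral_filter_of_dominated_convergence (fun _ => m ^ 2) ?_ ?_
      (integrable_const _) ?_
    · filter_upwards [hF] with t ht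
      exact (((ht.sub hFc).const_smul (t - c)⁻¹).norm.pow 2)
    · filter_upwards [hlip, self_mem_nhdsWithin] with t ht htc
      filter_upwards [ht] with x hx
      have htc' : 0 < t - c := sub_pos.2 htc
      rw [norm_pow, norm_norm, slope_def_module, norm_smul, norm_inv, norm_of_nonneg htc'.le]
      gcongr
      rwa [inv_mul_le_iff₀ htc', mul_comm]
    · filter_upwards [hd] with x hx
      exact ((hasDerivWithinAt_iff_tendsto_slope' self_notMem_Ioi).1 hx).norm.pow 2
  have hlt : ∫ x, ‖F' x‖ ^ 2 ∂μ < K ^ 2 := by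
    calc ∫ x, ‖F' x‖ ^ 2 ∂μ ≤ ∫ _, n ^ 2 ∂μ := by
          refine integral_mono_of_nonneg (ae_of_all _ fun x => by positivity)
            (integrable_const _) ?_
          filter_upwards [hF'] with x hx
          gcongr
      _ = (√(μ.real univ) * n) ^ 2 := by
          rw [integral_const, smul_eq_mul, mul_pow, sq_sqrt measureReal_nonneg]
      _ < K ^ 2 := by gcongr
  have hK0 : 0 ≤ K := (by positivity : 0 ≤ √(μ.real univ) * n).trans hK.le
  filter_upwards [hlim.eventually_le_const hlt, hF, self_mem_nhdsWithin] with t ht htm htc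
  have htc' : 0 < t - c := sub_pos.2 htc
  rw [lpNorm_two_eq_sqrt_integral (htm.sub hFc)]
  refine Real.sqrt_le_iff.2 ⟨by positivity, ?_⟩
  rwa [integral_norm_slope_sq, inv_mul_le_iff₀ (by positivity), mul_comm, ← mul_pow] at ht

end LpNorm

theorem sqrt_le_mul_sub_of_deriv_right_le {D D' : ℝ → ℝ} {a b K : ℝ} (hK : 0 ≤ K)
    (hD : ContinuousOn D (Icc a b)) (hD0 : ∀ t ∈ Icc a b, 0 ≤ D t) (ha : D a = 0)
    (hd : ∀ t ∈ Ioo a b, HasDerivWithinAt D (D' t) (Ioi t) t)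
    (hle : ∀ t ∈ Ioo a b, D' t ≤ 2 * K * √(D t)) {t : ℝ} (ht : t ∈ Icc a b) :
    √(D t) ≤ K * (t - a) := by
  refine le_of_forall_pos_le_add fun ε hε => ?_
  have hsub : Icc a t ⊆ Icc a b := Icc_subset_Icc_right ht.2
  have hsub' : Ioo a t ⊆ Ioo a b := Ioo_subset_Ioo_right ht.2
  have hpos : ∀ s ∈ Icc a b, 0 < D s + ε ^ 2 := fun s hs => by have := hD0 s hs; positivity
  -- The square root is regularised, since it is not differentiable where `D` vanishes.
  have hstep : √(D t + ε ^ 2) - √(D a + ε ^ 2) ≤ ∫ _ in a..t, K := by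
    refine intervalIntegral.sub_le_integral_of_hasDeriv_right_of_le
      (g' := fun s => D' s / (2 * √(D s + ε ^ 2))) ht.1
      (((hD.mono hsub).add continuousOn_const).sqrt) (fun s hs => ?_) (by simp) fun s hs => ?_
    · have hs' := hsub' hs
      exact ((hd s hs').add_const _).sqrt (hpos s (Ioo_subset_Icc_self hs')).ne'
    · have hs' := hsub' hs
      have := hpos s (Ioo_subset_Icc_self hs')
      have hmono : √(D s) ≤ √(D s + ε ^ 2) := Real.sqrt_le_sqrt (by linarith [sq_nonneg ε])
      rw [div_le_iff₀ (by positivity)]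
      nlinarith [hle s hs']
  rw [ha, zero_add, sqrt_sq hε.le, intervalIntegral.integral_const, smul_eq_mul] at hstep
  have hmono : √(D t) ≤ √(D t + ε ^ 2) := Real.sqrt_le_sqrt (by linarith [sq_nonneg ε])
  linarith

theorem exists_isOpen_inter_nonempty_subset_of_subset_iUnion {X ι : Type*} [TopologicalSpace X]
    [Countable ι] {G : Set X} [BaireSpace G] {F : ι → Set X} (hG : G.Nonempty)
    (hF : ∀ i, IsClosed (F i)) (hGF : G ⊆ ⋃ i, F i) :
    ∃ i, ∃ U, IsOpen U ∧ (G ∩ U).Nonempty ∧ G ∩ U ⊆ F i := by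
  have : Nonempty G := hG.to_subtype
  have hcover : ⋃ i, ((↑) : G → X) ⁻¹' F i = univ := by
    rw [← preimage_iUnion]
    exact eq_univ_of_forall fun x => hGF x.2
  obtain ⟨i, x, hx⟩ := nonempty_interior_of_iUnion_of_closed
    (fun i => (hF i).preimage continuous_subtype_val) hcover
  obtain ⟨V, hV, hVo, hxV⟩ := mem_interior.1 hx
  obtain ⟨U, hU, rfl⟩ := isOpen_induced_iff.1 hVo
  exact ⟨i, U, hU, ⟨x, x.2, hxV⟩, fun y hy => hV (show (⟨y, hy.1⟩ : G) ∈ _ from hy.2)⟩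

section Calculus

variable {E : Type*} [NormedAddCommGroup E]

theorem continuous_deriv_deriv_of_contDiff_two [NormedSpace ℝ E] {f : ℝ → E}
    (hf : ContDiff ℝ 2 f) : Continuous (deriv (deriv f)) :=
  (hf.deriv' (n := 1)).continuous_deriv_one

theorem periodic_deriv [NormedSpace ℝ E] {f : ℝ → E} {T : ℝ} (hf : Function.Periodic f T) :
    Function.Periodic (deriv f) T := fun x => by
  rw [← deriv_comp_add_const, funext hf]

theorem exists_norm_le_of_periodic {f : ℝ → E} {T : ℝ} (hf : Function.Periodic f T) (hT : T ≠ 0)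
    (hc : Continuous f) : ∃ M, ∀ x, ‖f x‖ ≤ M := by
  obtain ⟨M, hM⟩ := (hf.isBounded_of_continuous hT hc).exists_norm_le
  exact ⟨M, fun x => hM _ (mem_range_self x)⟩

theorem integral_eq_zero_of_hasDerivAt_of_periodic [NormedSpace ℝ E] [CompleteSpace E]
    {f f' : ℝ → E} {T : ℝ} (hT : 0 ≤ T) (hf : Function.Periodic f T)
    (hd : ∀ x, HasDerivAt f (f' x) x) (hc : Continuous f') : ∫ x in Icc 0 T, f' x = 0 := by
  rw [integral_Icc_eq_integral_Ioc, ← intervalIntegral.integral_of_le hT,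
    intervalIntegral.integral_eq_sub_of_hasDerivAt (fun x _ => hd x) (hc.intervalIntegrable _ _),
    sub_eq_zero]
  simpa using hf 0

theorem norm_sq_le_mul_setIntegral_Icc [InnerProductSpace ℝ E] {f : ℝ → E} (hf : ContDiff ℝ 1 f)
    {a b x : ℝ} (hab : a < b) (hx : x ∈ Icc a b) :
    ‖f x‖ ^ 2 ≤ (1 + (b - a)⁻¹) * ∫ y in Icc a b, (‖f y‖ ^ 2 + ‖deriv f y‖ ^ 2) := by
  have hcf : Continuous f := hf.continuous
  have : Continuous (deriv f) := hf.continuous_deriv le_rfl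
  have henergy : IntegrableOn (fun y => ‖f y‖ ^ 2 + ‖deriv f y‖ ^ 2) (Icc a b) :=
    Continuous.integrableOn_Icc (by fun_prop)
  obtain ⟨y, hy, hfy⟩ : ∃ y ∈ Icc a b, ‖f y‖ ^ 2 ≤ ⨍ y in Icc a b, ‖f y‖ ^ 2 :=
    exists_le_setAverage (by simp [hab]) (by simp) (Continuous.integrableOn_Icc (by fun_prop))
  have havg : ⨍ y in Icc a b, ‖f y‖ ^ 2
      ≤ (b - a)⁻¹ * ∫ y in Icc a b, (‖f y‖ ^ 2 + ‖deriv f y‖ ^ 2) := by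
    rw [setAverage_eq, smul_eq_mul, volume_real_Icc_of_le hab.le]
    have := sub_pos.2 hab
    gcongr ?_ * ?_
    refine setIntegral_mono (Continuous.integrableOn_Icc (by fun_prop)) henergy fun y => ?_
    simp
  have hdiff : ‖f x‖ ^ 2 - ‖f y‖ ^ 2 ≤ ∫ y in Icc a b, (‖f y‖ ^ 2 + ‖deriv f y‖ ^ 2) := by
    rw [← intervalIntegral.integral_eq_sub_of_hasDerivAt
      (fun y _ => ((hf.differentiable one_ne_zero y).hasDerivAt).norm_sq)
      (Continuous.intervalIntegrable (by fun_prop) _ _)]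
    calc ∫ s in y..x, 2 * inner ℝ (f s) (deriv f s)
        ≤ ∫ s in uIoc y x, ‖2 * inner ℝ (f s) (deriv f s)‖ :=
          (Real.le_norm_self _).trans intervalIntegral.norm_integral_le_integral_norm_uIoc
      _ ≤ ∫ s in Icc a b, ‖2 * inner ℝ (f s) (deriv f s)‖ :=
          setIntegral_mono_set (Continuous.integrableOn_Icc (by fun_prop))
            (ae_of_all _ fun s => norm_nonneg _)
            (uIoc_subset_uIcc.trans (ordConnected_Icc.uIcc_subset hy hx)).eventuallyLE
      _ ≤ ∫ s in Icc a b, (‖f s‖ ^ 2 + ‖deriv f s‖ ^ 2) := by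
          refine setIntegral_mono (Continuous.integrableOn_Icc (by fun_prop)) henergy fun s => ?_
          rw [norm_mul, norm_ofNat]
          nlinarith [norm_inner_le_norm (𝕜 := ℝ) (f s) (deriv f s),
            sq_nonneg (‖f s‖ - ‖deriv f s‖)]
  linarith

theorem inner_I_mul_self (a : ℂ) : inner ℝ a (Complex.I * a) = 0 := by
  rw [Complex.inner, Complex.mul_re, Complex.conj_re, Complex.conj_im, Complex.I_mul_re,
    Complex.I_mul_im]
  ring

/-- The term with `χ ‖∂z‖²` drops out because `⟪∂z, i ∂z⟫ = 0`. -/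
theorem integral_mul_inner_I_mul_deriv_deriv {z : ℝ → ℂ} {χ : ℝ → ℝ} {T : ℝ} (hT : 0 ≤ T)
    (hz : ContDiff ℝ 2 z) (hχ : ContDiff ℝ 1 χ) (pz : Function.Periodic z T)
    (pχ : Function.Periodic χ T) :
    ∫ y in Icc 0 T, χ y * inner ℝ (z y) (Complex.I * deriv (deriv z) y)
      = -∫ y in Icc 0 T, deriv χ y * inner ℝ (z y) (Complex.I * deriv z y) := by
  have hz1 : ContDiff ℝ 1 (deriv z) := hz.deriv'
  have hcz := hz.continuous
  have hcz1 := hz1.continuous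
  have := continuous_deriv_deriv_of_contDiff_two hz
  have hcχ := hχ.continuous
  have : Continuous (deriv χ) := hχ.continuous_deriv le_rfl
  have hderiv : ∀ x, HasDerivAt (fun x => χ x * inner ℝ (z x) (Complex.I * deriv z x))
      (deriv χ x * inner ℝ (z x) (Complex.I * deriv z x)
        + χ x * inner ℝ (z x) (Complex.I * deriv (deriv z) x)) x := fun x => by
    have dz := (hz.differentiable two_ne_zero x).hasDerivAt
    have dz1 := (hz1.differentiable one_ne_zero x).hasDerivAt
    have dχ := (hχ.differentiable one_ne_zero x).hasDerivAt
    simpa only [inner_I_mul_self, add_zero] using dχ.fun_mul (dz.inner ℝ (dz1.const_mul Complex.I))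
  have hzero := integral_eq_zero_of_hasDerivAt_of_periodic hT
    (fun x => by rw [pχ, pz, periodic_deriv pz]) hderiv (by fun_prop)
  rw [integral_add (Continuous.integrableOn_Icc (by fun_prop))
    (Continuous.integrableOn_Icc (by fun_prop))] at hzero
  linarith

theorem abs_integral_mul_inner_le_of_norm_sub_le {z g : ℝ → ℂ} {χ R : ℝ → ℝ} {T : ℝ} (hT : 0 ≤ T)
    (hz : ContDiff ℝ 2 z) (hχ : ContDiff ℝ 1 χ) (pz : Function.Periodic z T)
    (pχ : Function.Periodic χ T) (hg : AEStronglyMeasurable g (volume.restrict (Icc 0 T)))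
    (hR : Continuous R) (hgR : ∀ y, ‖g y - Complex.I * deriv (deriv z) y‖ ≤ R y) :
    |∫ y in Icc 0 T, χ y * inner ℝ (z y) (g y)|
      ≤ ∫ y in Icc 0 T, (|deriv χ y| * (‖z y‖ * ‖deriv z y‖) + |χ y| * (‖z y‖ * R y)) := by
  have hcz := hz.continuous
  have hcz1 : Continuous (deriv z) := hz.continuous_deriv one_le_two
  have := continuous_deriv_deriv_of_contDiff_two hz
  have hcχ := hχ.continuous
  have : Continuous (deriv χ) := hχ.continuous_deriv le_rfl
  set e : ℝ → ℂ := fun y => g y - Complex.I * deriv (deriv z) y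
  have he : IntegrableOn (fun y => χ y * inner ℝ (z y) (e y)) (Icc 0 T) := by
    have hRi : IntegrableOn (fun y => |χ y| * (‖z y‖ * R y)) (Icc 0 T) :=
      Continuous.integrableOn_Icc (by fun_prop)
    refine hRi.mono' ?_ (ae_of_all _ fun y => ?_)
    · have hem : AEStronglyMeasurable e (volume.restrict (Icc 0 T)) :=
        hg.sub (by fun_prop : Continuous _).aestronglyMeasurable
      exact hcχ.aestronglyMeasurable.mul (hcz.aestronglyMeasurable.inner hem)
    · rw [norm_mul, norm_eq_abs]
      gcongr
      exact (norm_inner_le_norm _ _).trans (by gcongr; exact hgR y)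
  have hsplit : ∫ y in Icc 0 T, χ y * inner ℝ (z y) (g y)
      = ∫ y in Icc 0 T, (-(deriv χ y * inner ℝ (z y) (Complex.I * deriv z y))
          + χ y * inner ℝ (z y) (e y)) := by
    rw [integral_add (Continuous.integrableOn_Icc (by fun_prop)) he, integral_neg,
      ← integral_mul_inner_I_mul_deriv_deriv hT hz hχ pz pχ,
      ← integral_add (Continuous.integrableOn_Icc (by fun_prop)) he]
    simp only [← mul_add, ← inner_add_right, e, add_sub_cancel]
  rw [hsplit, ← norm_eq_abs]
  refine norm_integral_le_of_norm_le (Continuous.integrableOn_Icc (by fun_prop))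
    (ae_of_all _ fun y => (norm_add_le _ _).trans ?_)
  rw [norm_neg, norm_mul, norm_mul, norm_eq_abs (deriv χ y), norm_eq_abs (χ y)]
  gcongr
  · exact (norm_inner_le_norm _ _).trans (by simp)
  · exact (norm_inner_le_norm _ _).trans (by gcongr; exact hgR y)

end Calculus

section WeightedEnergy

variable {α E : Type*} [MeasurableSpace α] {μ : Measure α} [IsFiniteMeasure μ]
  [NormedAddCommGroup E] {Ψ : ℝ → α → ℝ} {z : ℝ → α → E} {a B C M : ℝ}

theorem abs_mul_norm_sq_sub_mul_norm_sq_le {ψ φ B M δ : ℝ} {v w : E} (hδ : |ψ - φ| ≤ δ)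
    (hφ : |φ| ≤ B) (hv : ‖v‖ ≤ M) (hw : ‖w‖ ≤ M) :
    |ψ * ‖v‖ ^ 2 - φ * ‖w‖ ^ 2| ≤ δ * M ^ 2 + 2 * B * M * ‖v - w‖ := by
  have hM : 0 ≤ M := (norm_nonneg _).trans hv
  calc |ψ * ‖v‖ ^ 2 - φ * ‖w‖ ^ 2|
      = |(ψ - φ) * ‖v‖ ^ 2 + φ * ((‖v‖ + ‖w‖) * (‖v‖ - ‖w‖))| := by ring_nf
    _ ≤ |ψ - φ| * ‖v‖ ^ 2 + |φ| * ((‖v‖ + ‖w‖) * |‖v‖ - ‖w‖|) := by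
        refine (abs_add_le _ _).trans_eq ?_
        simp only [abs_mul, abs_pow, abs_norm, abs_of_nonneg (add_nonneg (norm_nonneg v)
          (norm_nonneg w))]
    _ ≤ δ * M ^ 2 + B * ((M + M) * ‖v - w‖) := by
        have : 0 ≤ B := (abs_nonneg _).trans hφ
        have : 0 ≤ δ := (abs_nonneg _).trans hδ
        gcongr
        exact abs_norm_sub_norm_le v w
    _ = δ * M ^ 2 + 2 * B * M * ‖v - w‖ := by ring

theorem memLp_two_mul_norm_sq {ψ : α → ℝ} {v : α → E} (hψ : AEStronglyMeasurable ψ μ)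
    (hψB : ∀ x, |ψ x| ≤ B) (hv : AEStronglyMeasurable v μ) (hvM : ∀ x, ‖v x‖ ≤ M) :
    MemLp (fun x => ψ x * ‖v x‖ ^ 2) 2 μ :=
  MemLp.of_bound (hψ.mul (hv.norm.pow 2)) (B * M ^ 2) (ae_of_all _ fun x => by
    have : 0 ≤ B := (abs_nonneg _).trans (hψB x)
    rw [norm_mul, norm_pow, norm_norm, norm_eq_abs]
    gcongr
    exacts [hψB x, hvM x])

theorem isBigO_lpNorm_two_mul_norm_sq_sub
    (hΨa : ∀ x, |Ψ a x| ≤ B) (hza : AEStronglyMeasurable (z a) μ) (hzaM : ∀ x, ‖z a x‖ ≤ M)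
    (hz : ∀ᶠ t in 𝓝[>] a, AEStronglyMeasurable (z t) μ) (hzM : ∀ᶠ t in 𝓝[>] a, ∀ x, ‖z t x‖ ≤ M)
    (hΨO : ∀ᶠ t in 𝓝[>] a, ∀ x, |Ψ t x - Ψ a x| ≤ C * (t - a))
    (hzO : (fun t => lpNorm (z t - z a) 2 μ) =O[𝓝[>] a] fun t => t - a) :
    (fun t => lpNorm ((fun x => Ψ t x * ‖z t x‖ ^ 2) - fun x => Ψ a x * ‖z a x‖ ^ 2) 2 μ)
      =O[𝓝[>] a] fun t => t - a := by
  have hconst : (fun t => ‖C * (t - a) * M ^ 2‖ * lpNorm (1 : α → ℝ) 2 μ)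
      =O[𝓝[>] a] fun t => t - a := by
    have := (isBigO_refl (fun t : ℝ => t - a) (𝓝[>] a)).norm_left.const_mul_left
      (|C| * M ^ 2 * lpNorm (1 : α → ℝ) 2 μ)
    refine this.congr_left fun t => ?_
    simp only [norm_mul, norm_pow, norm_eq_abs, sq_abs]
    ring
  refine IsBigO.trans (IsBigO.of_bound' ?_) (hconst.add (hzO.const_mul_left ‖2 * B * M‖))
  filter_upwards [hz, hzM, hΨO] with t htm htM htΨ
  have hsub : MemLp (z t - z a) 2 μ :=
    MemLp.of_bound (htm.sub hza) (M + M)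
      (ae_of_all _ fun x => (norm_sub_le _ _).trans (add_le_add (htM x) (hzaM x)))
  have hone : MemLp ((C * (t - a) * M ^ 2) • (1 : α → ℝ)) 2 μ := (memLp_const 1).const_smul _
  have hnorm : MemLp ((2 * B * M) • fun x => ‖(z t - z a) x‖) 2 μ := hsub.norm.const_smul _
  rw [norm_of_nonneg lpNorm_nonneg]
  calc lpNorm ((fun x => Ψ t x * ‖z t x‖ ^ 2) - fun x => Ψ a x * ‖z a x‖ ^ 2) 2 μ
      ≤ lpNorm ((C * (t - a) * M ^ 2) • (1 : α → ℝ)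
          + (2 * B * M) • fun x => ‖(z t - z a) x‖) 2 μ :=
        lpNorm_mono_real (hone.add hnorm) fun x => by
          simpa using abs_mul_norm_sq_sub_mul_norm_sq_le (htΨ x) (hΨa x) (htM x) (hzaM x)
    _ ≤ ‖C * (t - a) * M ^ 2‖ * lpNorm (1 : α → ℝ) 2 μ
          + ‖2 * B * M‖ * lpNorm (z t - z a) 2 μ := by
        refine (lpNorm_add_le hone one_le_two).trans_eq ?_
        rw [lpNorm_const_smul, lpNorm_const_smul, lpNorm_norm hsub.1, coe_nnnorm, coe_nnnorm]
    _ ≤ _ := Real.le_norm_self _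

theorem hasDerivWithinAt_integral_mul_norm_sq [InnerProductSpace ℝ E] {Ψ' : α → ℝ} {z' : α → E}
    (hΨ : ∀ᶠ t in 𝓝[≥] a, AEStronglyMeasurable (Ψ t) μ)
    (hΨB : ∀ᶠ t in 𝓝[≥] a, ∀ x, |Ψ t x| ≤ B)
    (hz : ∀ᶠ t in 𝓝[≥] a, AEStronglyMeasurable (z t) μ)
    (hzM : ∀ᶠ t in 𝓝[≥] a, ∀ x, ‖z t x‖ ≤ M)
    (hΨO : ∀ᶠ t in 𝓝[>] a, ∀ x, |Ψ t x - Ψ a x| ≤ C * (t - a))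
    (hzO : (fun t => lpNorm (z t - z a) 2 μ) =O[𝓝[>] a] fun t => t - a)
    (dΨ : ∀ x, HasDerivWithinAt (Ψ · x) (Ψ' x) (Ioi a) a)
    (dz : ∀ x, HasDerivWithinAt (z · x) (z' x) (Ioi a) a) :
    HasDerivWithinAt (fun t => ∫ x, Ψ t x * ‖z t x‖ ^ 2 ∂μ)
      (∫ x, (Ψ' x * ‖z a x‖ ^ 2 + Ψ a x * (2 * inner ℝ (z a x) (z' x))) ∂μ) (Ioi a) a := by
  have hle : 𝓝[>] a ≤ 𝓝[≥] a := nhdsWithin_mono a Ioi_subset_Ici_self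
  have hmem := hΨ.and (hΨB.and (hz.and hzM))
  obtain ⟨hΨa, hΨaB, hza, hzaM⟩ := hmem.self_of_nhdsWithin self_mem_Ici
  refine hasDerivWithinAt_integral_of_lpNorm_isBigO (F := fun t x => Ψ t x * ‖z t x‖ ^ 2)
    (memLp_two_mul_norm_sq hΨa hΨaB hza hzaM) ?_
    (isBigO_lpNorm_two_mul_norm_sq_sub hΨaB hza hzaM (hle hz) (hle hzM) hΨO hzO)
    (ae_of_all _ fun x => (dΨ x).mul (dz x).norm_sq)
  filter_upwards [hle hmem] with t ⟨ht1, ht2, ht3, ht4⟩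
  exact memLp_two_mul_norm_sq ht1 ht2 ht3 ht4

end WeightedEnergy

/-! ### Solutions and their Lipschitz times -/

/-- `u` is a separately regular, `2π`-periodic in space solution of `∂ₜu = i(∂ₓₓu + Vu)` on the
time interval `[0, 1]`, with `|V| ≤ L` and with `H¹` norm over a period at most `A`. -/
structure IsSchrodingerSolution (u V : ℝ → ℝ → ℂ) (L A : ℝ) : Prop where
  contDiff_space : ∀ t ∈ Icc (0 : ℝ) 1, ContDiff ℝ 2 (u · t)
  contDiff_time : ∀ x, ContDiff ℝ 1 (u x)
  periodic : ∀ t, Function.Periodic (u · t) (2 * π)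
  equation : ∀ x, ∀ t ∈ Icc (0 : ℝ) 1,
    deriv (u x) t = Complex.I * (deriv (deriv (u · t)) x + V x t * u x t)
  norm_potential_le : ∀ x t, ‖V x t‖ ≤ L
  integral_le : ∀ t ∈ Icc (0 : ℝ) 1, ∫ x in 𝕋, (‖u x t‖ ^ 2 + ‖deriv (u · t) x‖ ^ 2) ≤ A ^ 2

/-- The difference quotients of `u` at time `a` from the right are bounded in `L²` of a period. -/
def RightLipschitzAt (u : ℝ → ℝ → ℂ) (a : ℝ) : Prop :=
  (fun t => lpNorm ((u · t) - (u · a)) 2 (volume.restrict 𝕋)) =O[𝓝[>] a] fun t => t - a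

/-- The times in `[0, 1]` at which `|∂ₜu| ≤ n` everywhere. -/
def speedLeTimes (u : ℝ → ℝ → ℂ) (n : ℝ) : Set ℝ :=
  {t ∈ Icc (0 : ℝ) 1 | ∀ x, ‖deriv (u x) t‖ ≤ n}

/-- The points at which `u` is `m`-Lipschitz in time on `[0, 1]`. -/
def lipschitzPoints (u : ℝ → ℝ → ℂ) (m : ℕ) : Set ℝ :=
  {x | ∀ s ∈ Icc (0 : ℝ) 1, ∀ t ∈ Icc (0 : ℝ) 1, ‖u x t - u x s‖ ≤ m * |t - s|}

theorem monotone_lipschitzPoints (u : ℝ → ℝ → ℂ) : Monotone (lipschitzPoints u) :=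
  fun m m' hm x hx s hs t ht => (hx s hs t ht).trans (by gcongr)

namespace IsSchrodingerSolution

variable {u V : ℝ → ℝ → ℂ} {L A : ℝ} {a t : ℝ}

theorem continuous_space (h : IsSchrodingerSolution u V L A) (ht : t ∈ Icc (0 : ℝ) 1) :
    Continuous (u · t) :=
  (h.contDiff_space t ht).continuous

theorem continuous_deriv_space (h : IsSchrodingerSolution u V L A) (ht : t ∈ Icc (0 : ℝ) 1) :
    Continuous (deriv (u · t)) :=
  (h.contDiff_space t ht).continuous_deriv one_le_two

theorem hasDerivAt_time (h : IsSchrodingerSolution u V L A) (x t : ℝ) :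
    HasDerivAt (u x) (deriv (u x) t) t :=
  ((h.contDiff_time x).differentiable one_ne_zero t).hasDerivAt

theorem potential_bound_nonneg (h : IsSchrodingerSolution u V L A) : 0 ≤ L :=
  (norm_nonneg _).trans (h.norm_potential_le 0 0)

theorem exists_norm_le (h : IsSchrodingerSolution u V L A) :
    ∃ M, ∀ t ∈ Icc (0 : ℝ) 1, ∀ x, ‖u x t‖ ≤ M := by
  refine ⟨√((1 + (2 * π - 0)⁻¹) * A ^ 2), fun t ht x => Real.le_sqrt_of_sq_le ?_⟩
  obtain ⟨y, hy, hxy⟩ := (h.periodic t).exists_mem_Ico₀ two_pi_pos x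
  rw [show u x t = u y t from hxy]
  refine (norm_sq_le_mul_setIntegral_Icc ((h.contDiff_space t ht).of_le one_le_two) two_pi_pos
    (Ico_subset_Icc_self hy)).trans ?_
  gcongr
  · rw [sub_zero]
    positivity
  · exact h.integral_le t ht

theorem memLp (h : IsSchrodingerSolution u V L A) (ht : t ∈ Icc (0 : ℝ) 1) :
    MemLp (u · t) 2 (volume.restrict 𝕋) := by
  obtain ⟨M, hM⟩ := h.exists_norm_le
  exact MemLp.of_bound (h.continuous_space ht).aestronglyMeasurable M (ae_of_all _ (hM t ht))

theorem norm_time_deriv_sub_le (h : IsSchrodingerSolution u V L A) (ht : t ∈ Icc (0 : ℝ) 1)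
    (x : ℝ) : ‖deriv (u x) t - Complex.I * deriv (deriv (u · t)) x‖ ≤ L * ‖u x t‖ := by
  rw [h.equation x t ht, mul_add, add_sub_cancel_left, norm_mul, Complex.norm_I, one_mul, norm_mul]
  gcongr
  exact h.norm_potential_le x t

theorem norm_deriv_deriv_space_le (h : IsSchrodingerSolution u V L A) {n M : ℝ}
    (hM : ∀ t ∈ Icc (0 : ℝ) 1, ∀ x, ‖u x t‖ ≤ M) (ht : t ∈ speedLeTimes u n) (x : ℝ) :
    ‖deriv (deriv (u · t)) x‖ ≤ n + L * M := by
  calc ‖deriv (deriv (u · t)) x‖ = ‖Complex.I * deriv (deriv (u · t)) x‖ := by simp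
    _ ≤ ‖deriv (u x) t‖ + ‖deriv (u x) t - Complex.I * deriv (deriv (u · t)) x‖ :=
        norm_le_norm_add_norm_sub _ _
    _ ≤ n + L * M := by
        refine add_le_add (ht.2 x) ((h.norm_time_deriv_sub_le ht.1 x).trans ?_)
        exact mul_le_mul_of_nonneg_left (hM t ht.1 x) h.potential_bound_nonneg

theorem measurable_time_deriv (h : IsSchrodingerSolution u V L A) (ha : a ∈ Ico (0 : ℝ) 1) :
    Measurable fun x => deriv (u x) a := by
  obtain ⟨s, -, hs, hsa⟩ := exists_seq_strictAnti_tendsto' ha.2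
  have hs' : Tendsto s atTop (𝓝[≠] a) :=
    tendsto_nhdsWithin_iff.2 ⟨hsa, Eventually.of_forall fun k => (hs k).1.ne'⟩
  refine measurable_of_tendsto_metrizable (f := fun k x => slope (u x) a (s k)) (fun k => ?_)
    (tendsto_pi_nhds.2 fun x => (hasDerivAt_iff_tendsto_slope.1 (h.hasDerivAt_time x a)).comp hs')
  have hsk := h.continuous_space ⟨ha.1.trans (hs k).1.le, (hs k).2.le⟩
  have hsa := h.continuous_space (Ico_subset_Icc_self ha)
  simp only [slope_def_module]
  exact ((hsk.sub hsa).const_smul _).measurable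

theorem hasDerivWithinAt_integral (h : IsSchrodingerSolution u V L A) (ha : a ∈ Ico (0 : ℝ) 1)
    (hR : RightLipschitzAt u a) {Ψ : ℝ → ℝ → ℝ} {Ψ' : ℝ → ℝ} {B C N : ℝ}
    (hΨ : ∀ t, Continuous (Ψ t)) (hΨB : ∀ᶠ t in 𝓝[≥] a, ∀ x, |Ψ t x| ≤ B)
    (hΨC : ∀ᶠ t in 𝓝[>] a, ∀ x, |Ψ t x - Ψ a x| ≤ C * (t - a))
    (dΨ : ∀ x, HasDerivWithinAt (Ψ · x) (Ψ' x) (Ioi a) a)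
    {w : ℝ → ℂ} (hw : Continuous w) (hwN : ∀ x, ‖w x‖ ≤ N) :
    HasDerivWithinAt (fun t => ∫ x in 𝕋, Ψ t x * ‖u x t - w x‖ ^ 2)
      (∫ x in 𝕋, (Ψ' x * ‖u x a - w x‖ ^ 2
        + Ψ a x * (2 * inner ℝ (u x a - w x) (deriv (u x) a)))) (Ioi a) a := by
  obtain ⟨M, hM⟩ := h.exists_norm_le
  have hmem : ∀ᶠ t in 𝓝[≥] a, t ∈ Icc (0 : ℝ) 1 := by
    filter_upwards [Icc_mem_nhdsGE ha.2] with t ht using ⟨ha.1.trans ht.1, ht.2⟩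
  refine hasDerivWithinAt_integral_mul_norm_sq (z := fun t x => u x t - w x) (M := M + N)
    (Eventually.of_forall fun t => (hΨ t).aestronglyMeasurable) hΨB ?_ ?_ hΨC ?_ dΨ
    fun x => ((h.hasDerivAt_time x a).sub_const _).hasDerivWithinAt
  · filter_upwards [hmem] with t ht
    exact ((h.continuous_space ht).sub hw).aestronglyMeasurable
  · filter_upwards [hmem] with t ht x
    exact (norm_sub_le _ _).trans (add_le_add (hM t ht x) (hwN x))
  · refine hR.congr_left fun t => ?_
    congr 1
    ext x
    simp

theorem continuousOn_integral (h : IsSchrodingerSolution u V L A) {S : Set ℝ} (hS : IsCompact S)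
    {Ψ : ℝ → ℝ → ℝ} {B N : ℝ} (hΨ : ∀ t, Continuous (Ψ t)) (hΨ' : ∀ x, Continuous (Ψ · x))
    {I : Set ℝ} (hI : I ⊆ Icc 0 1) (hΨB : ∀ t ∈ I, ∀ x, |Ψ t x| ≤ B) {w : ℝ → ℂ}
    (hw : Continuous w) (hwN : ∀ x, ‖w x‖ ≤ N) :
    ContinuousOn (fun t => ∫ x in S, Ψ t x * ‖u x t - w x‖ ^ 2) I := by
  obtain ⟨M, hM⟩ := h.exists_norm_le
  have : IsFiniteMeasure (volume.restrict S) := ⟨by simpa using hS.measure_lt_top⟩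
  refine continuousOn_of_dominated (bound := fun _ => B * (M + N) ^ 2) (fun t ht => ?_)
    (fun t ht => ae_of_all _ fun x => ?_) (integrable_const _) (ae_of_all _ fun x => ?_)
  · have := h.continuous_space (hI ht)
    have := hΨ t
    exact (by fun_prop : Continuous _).aestronglyMeasurable
  · have : 0 ≤ B := (abs_nonneg _).trans (hΨB t ht x)
    rw [norm_mul, norm_pow, norm_norm, norm_eq_abs]
    gcongr
    · exact hΨB t ht x
    · exact (norm_sub_le _ _).trans (add_le_add (hM t (hI ht) x) (hwN x))
  · have := (h.contDiff_time x).continuous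
    have := hΨ' x
    fun_prop

end IsSchrodingerSolution

theorem exists_mem_eventually_Ioo_subset_compl {G : Set ℝ} {a t : ℝ} (hG : IsClosed G) (ha : a ∈ G)
    (hat : a ≤ t) (ht : t ∉ G) : ∃ g ∈ G ∩ Icc a t, ∀ᶠ r in 𝓝[>] t, Ioo g r ⊆ Gᶜ := by
  obtain ⟨g, hg, hgmax⟩ := (isCompact_Icc.inter_left hG).exists_isGreatest ⟨a, ha, le_rfl, hat⟩
  obtain ⟨b, htb, hb⟩ := exists_Ico_subset_of_mem_nhds (hG.isOpen_compl.mem_nhds ht) (exists_gt t)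
  refine ⟨g, hg, ?_⟩
  filter_upwards [Ioc_mem_nhdsGT htb] with r hr s hs hsG
  rcases le_or_gt s t with hst | hts
  · exact (hgmax ⟨hsG, hg.2.1.trans hs.1.le, hst⟩).not_gt hs.1
  · exact hb ⟨hts.le, hs.2.trans_le hr.2⟩ hsG

theorem measureReal_period : (volume.restrict 𝕋).real univ = 2 * π := by
  simp [pi_nonneg]

namespace IsSchrodingerSolution

variable {u V : ℝ → ℝ → ℂ} {L A : ℝ} {a b c t : ℝ}

theorem continuous_time_deriv (h : IsSchrodingerSolution u V L A) (x : ℝ) :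
    Continuous (deriv (u x)) :=
  (h.contDiff_time x).continuous_deriv le_rfl

theorem isClosed_speedLeTimes (h : IsSchrodingerSolution u V L A) (n : ℝ) :
    IsClosed (speedLeTimes u n) := by
  simp only [speedLeTimes, ofPred_and, ofPred_mem_eq, ofPred_forall]
  exact isClosed_Icc.inter (isClosed_iInter fun x =>
    isClosed_le (h.continuous_time_deriv x).norm continuous_const)

theorem exists_mem_speedLeTimes (h : IsSchrodingerSolution u V L A) (ht : t ∈ Icc (0 : ℝ) 1) :
    ∃ n : ℕ, t ∈ speedLeTimes u n := by
  obtain ⟨M, hM⟩ := h.exists_norm_le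
  obtain ⟨C, hC⟩ := exists_norm_le_of_periodic (periodic_deriv (periodic_deriv (h.periodic t)))
    two_pi_pos.ne' (continuous_deriv_deriv_of_contDiff_two (h.contDiff_space t ht))
  obtain ⟨n, hn⟩ := exists_nat_ge (C + L * M)
  refine ⟨n, ht, fun x => le_trans ?_ hn⟩
  calc ‖deriv (u x) t‖
      ≤ ‖Complex.I * deriv (deriv (u · t)) x‖
          + ‖deriv (u x) t - Complex.I * deriv (deriv (u · t)) x‖ := norm_le_norm_add_norm_sub' _ _
    _ ≤ C + L * M := by
        rw [norm_mul, Complex.norm_I, one_mul]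
        refine add_le_add (hC x) ((h.norm_time_deriv_sub_le ht x).trans ?_)
        exact mul_le_mul_of_nonneg_left (hM t ht x) h.potential_bound_nonneg

theorem isClosed_lipschitzPoints (h : IsSchrodingerSolution u V L A) (m : ℕ) :
    IsClosed (lipschitzPoints u m) := by
  simp only [lipschitzPoints, ofPred_forall]
  exact isClosed_biInter fun s hs => isClosed_biInter fun t ht =>
    isClosed_le ((h.continuous_space ht).sub (h.continuous_space hs)).norm continuous_const

theorem iUnion_lipschitzPoints (h : IsSchrodingerSolution u V L A) :
    ⋃ m, lipschitzPoints u m = univ := by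
  refine eq_univ_of_forall fun x => mem_iUnion.2 ?_
  obtain ⟨C, hC⟩ := isCompact_Icc.exists_bound_of_continuousOn (s := Icc (0 : ℝ) 1)
    (h.continuous_time_deriv x).continuousOn
  obtain ⟨m, hm⟩ := exists_nat_ge C
  exact ⟨m, fun s hs t ht => (convex_Icc 0 1).norm_image_sub_le_of_norm_deriv_le
    (fun r _ => (h.hasDerivAt_time x r).differentiableAt) (fun r hr => (hC r hr).trans hm) hs ht⟩

theorem norm_time_deriv_sub_I_mul_le (h : IsSchrodingerSolution u V L A) {n M : ℝ}
    (hM : ∀ t ∈ Icc (0 : ℝ) 1, ∀ x, ‖u x t‖ ≤ M) (hc : c ∈ speedLeTimes u n)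
    (ht : t ∈ Icc (0 : ℝ) 1) (x : ℝ) :
    ‖deriv (u x) t - Complex.I * deriv (deriv ((u · t) - (u · c))) x‖ ≤ n + 2 * L * M := by
  have hderiv : deriv (deriv ((u · t) - (u · c))) x
      = deriv (deriv (u · t)) x - deriv (deriv (u · c)) x := by
    have dt := h.contDiff_space t ht
    have dc := h.contDiff_space c hc.1
    have : deriv ((u · t) - (u · c)) = deriv (u · t) - deriv (u · c) := funext fun y =>
      deriv_sub (dt.differentiable two_ne_zero y) (dc.differentiable two_ne_zero y)
    rw [this]
    exact deriv_sub (dt.deriv'.differentiable one_ne_zero x)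
      (dc.deriv'.differentiable one_ne_zero x)
  calc ‖deriv (u x) t - Complex.I * deriv (deriv ((u · t) - (u · c))) x‖
      = ‖(deriv (u x) t - Complex.I * deriv (deriv (u · t)) x)
          + Complex.I * deriv (deriv (u · c)) x‖ := by rw [hderiv]; ring_nf
    _ ≤ L * M + (n + L * M) := by
        refine (norm_add_le _ _).trans (add_le_add ?_ ?_)
        · exact (h.norm_time_deriv_sub_le ht x).trans
            (mul_le_mul_of_nonneg_left (hM t ht x) h.potential_bound_nonneg)
        · simpa using h.norm_deriv_deriv_space_le hM hc x
    _ = n + 2 * L * M := by ring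

theorem integral_inner_sub_time_deriv_le (h : IsSchrodingerSolution u V L A) {n M : ℝ}
    (hM : ∀ t ∈ Icc (0 : ℝ) 1, ∀ x, ‖u x t‖ ≤ M) (hc : c ∈ speedLeTimes u n)
    (ht : t ∈ Ico (0 : ℝ) 1) :
    ∫ x in 𝕋, inner ℝ (u x t - u x c) (deriv (u x) t)
      ≤ √(2 * π) * (n + 2 * L * M) * lpNorm ((u · t) - (u · c)) 2 (volume.restrict 𝕋) := by
  have ht' := Ico_subset_Icc_self ht
  have hn : 0 ≤ n + 2 * L * M :=
    (norm_nonneg _).trans (h.norm_time_deriv_sub_I_mul_le hM hc ht' 0)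
  have hbound := abs_integral_mul_inner_le_of_norm_sub_le (z := (u · t) - (u · c))
    (χ := fun _ => 1) two_pi_pos.le ((h.contDiff_space t ht').sub (h.contDiff_space c hc.1))
    contDiff_const ((h.periodic t).sub (h.periodic c)) (fun _ => rfl)
    (h.measurable_time_deriv ht).aestronglyMeasurable continuous_const
    (h.norm_time_deriv_sub_I_mul_le hM hc ht')
  simp only [one_mul, deriv_const, abs_zero, zero_mul, zero_add, abs_one, Pi.sub_apply,
    integral_mul_const] at hbound
  have hCS := integral_norm_le_sqrt_measureReal_mul_lpNorm_two ((h.memLp ht').sub (h.memLp hc.1))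
  rw [measureReal_period] at hCS
  calc _ ≤ _ := (le_abs_self _).trans hbound
    _ ≤ _ := mul_le_mul_of_nonneg_right hCS hn
    _ = _ := by ring

theorem lpNorm_sub_le_of_forall_rightLipschitzAt (h : IsSchrodingerSolution u V L A) {n M : ℝ}
    (hM : ∀ t ∈ Icc (0 : ℝ) 1, ∀ x, ‖u x t‖ ≤ M) (hc : c ∈ speedLeTimes u n) (hb : b ≤ 1)
    (hR : ∀ t ∈ Ioo c b, RightLipschitzAt u t) (ht : t ∈ Icc c b) :
    lpNorm ((u · t) - (u · c)) 2 (volume.restrict 𝕋) ≤ √(2 * π) * (n + 2 * L * M) * (t - c) := by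
  have hsub : Icc c b ⊆ Icc 0 1 := Icc_subset_Icc hc.1.1 hb
  have hK : 0 ≤ √(2 * π) * (n + 2 * L * M) := mul_nonneg (sqrt_nonneg _)
    ((norm_nonneg _).trans (h.norm_time_deriv_sub_I_mul_le hM hc (hsub ht) 0))
  have hw := h.continuous_space hc.1
  have hnorm : ∀ s ∈ Icc c b, lpNorm ((u · s) - (u · c)) 2 (volume.restrict 𝕋)
      = √(∫ x in 𝕋, 1 * ‖u x s - u x c‖ ^ 2) := fun s hs => by
    rw [lpNorm_two_eq_sqrt_integral ((h.memLp (hsub hs)).sub (h.memLp hc.1)).1]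
    simp
  rw [hnorm t ht]
  refine sqrt_le_mul_sub_of_deriv_right_le
    (D := fun s => ∫ x in 𝕋, 1 * ‖u x s - u x c‖ ^ 2)
    (D' := fun s => ∫ x in 𝕋, (0 * ‖u x s - u x c‖ ^ 2
      + 1 * (2 * inner ℝ (u x s - u x c) (deriv (u x) s)))) hK ?_
    (fun s _ => by positivity) (by simp) (fun s hs => ?_) (fun s hs => ?_) ht
  · exact h.continuousOn_integral (Ψ := fun _ _ => 1) isCompact_Icc (fun _ => continuous_const)
      (fun _ => continuous_const) hsub (B := 1) (by simp) hw (hM c hc.1)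
  · exact h.hasDerivWithinAt_integral (Ψ := fun _ _ => 1)
      ⟨hc.1.1.trans hs.1.le, hs.2.trans_le hb⟩ (hR s hs) (fun _ => continuous_const) (B := 1)
      (by simp) (C := 0) (by simp) (fun _ => hasDerivWithinAt_const ..) hw (hM c hc.1)
  · have := h.integral_inner_sub_time_deriv_le hM hc ⟨hc.1.1.trans hs.1.le, hs.2.trans_le hb⟩
    rw [← hnorm s (Ioo_subset_Icc_self hs)]
    simp only [zero_mul, zero_add, one_mul, integral_const_mul]
    linarith

theorem eventually_lpNorm_sub_le (h : IsSchrodingerSolution u V L A) {n K : ℝ} (m : ℕ)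
    (hK : √(2 * π) * n < K) (hc : c ∈ speedLeTimes u n) (hc1 : c < 1) :
    ∀ᶠ t in 𝓝[>] c, lpNorm ((u · t) - (u · c)) 2
      (volume.restrict (𝕋 ∩ lipschitzPoints u m)) ≤ K * (t - c) := by
  have hn : 0 ≤ n := (norm_nonneg _).trans (hc.2 0)
  have hmeas : MeasurableSet (𝕋 ∩ lipschitzPoints u m) :=
    measurableSet_Icc.inter (h.isClosed_lipschitzPoints m).measurableSet
  have hle : volume.restrict (𝕋 ∩ lipschitzPoints u m) ≤ volume.restrict 𝕋 :=
    Measure.restrict_mono inter_subset_left le_rfl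
  have : IsFiniteMeasure (volume.restrict (𝕋 ∩ lipschitzPoints u m)) :=
    isFiniteMeasure_of_le _ hle
  have hev : ∀ᶠ t in 𝓝[>] c, t ∈ Icc (0 : ℝ) 1 ∧ c ≤ t := by
    filter_upwards [Ioc_mem_nhdsGT hc1] with t ht using ⟨⟨hc.1.1.trans ht.1.le, ht.2⟩, ht.1.le⟩
  refine eventually_lpNorm_two_sub_le (F := fun t x => u x t) (m := m) hn (lt_of_le_of_lt ?_ hK)
    (h.continuous_space hc.1).aestronglyMeasurable ?_ ?_
    (ae_of_all _ fun x => (h.hasDerivAt_time x c).hasDerivWithinAt) (ae_of_all _ hc.2)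
  · gcongr
    exact (ENNReal.toReal_mono (measure_ne_top _ _) (hle univ)).trans_eq measureReal_period
  · filter_upwards [hev] with t ht using (h.continuous_space ht.1).aestronglyMeasurable
  · filter_upwards [hev] with t ht
    filter_upwards [ae_restrict_mem hmeas] with x hx
    simpa only [abs_of_nonneg (sub_nonneg.2 ht.2)] using hx.2 c hc.1 t ht.1

theorem lpNorm_restrict_sub_le_trans (h : IsSchrodingerSolution u V L A) {S : Set ℝ} {K : ℝ}
    (hb : b ∈ Icc (0 : ℝ) 1) (hc : c ∈ Icc (0 : ℝ) 1)
    (hab : lpNorm ((u · b) - (u · a)) 2 (volume.restrict (𝕋 ∩ S)) ≤ K * (b - a))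
    (hbc : lpNorm ((u · c) - (u · b)) 2 (volume.restrict (𝕋 ∩ S)) ≤ K * (c - b)) :
    lpNorm ((u · c) - (u · a)) 2 (volume.restrict (𝕋 ∩ S)) ≤ K * (c - a) := by
  have hm : ∀ {s}, s ∈ Icc (0 : ℝ) 1 → MemLp (u · s) 2 (volume.restrict (𝕋 ∩ S)) :=
    fun hs => (h.memLp hs).mono_measure (Measure.restrict_mono inter_subset_left le_rfl)
  calc _ ≤ _ := lpNorm_sub_le_lpNorm_sub_add_lpNorm_sub (hm hc) (hm hb) one_le_two
    _ ≤ K * (c - b) + K * (b - a) := add_le_add hbc hab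
    _ = K * (c - a) := by ring

theorem continuousOn_lpNorm_sub (h : IsSchrodingerSolution u V L A) {S : Set ℝ} (hS : IsCompact S)
    (ha : a ∈ Icc (0 : ℝ) 1) :
    ContinuousOn (fun t => lpNorm ((u · t) - (u · a)) 2 (volume.restrict S)) (Icc 0 1) := by
  obtain ⟨M, hM⟩ := h.exists_norm_le
  refine (h.continuousOn_integral (Ψ := fun _ _ => 1) hS (fun _ => continuous_const)
    (fun _ => continuous_const) subset_rfl (B := 1) (by simp) (h.continuous_space ha)
    (hM a ha)).sqrt.congr fun t ht => ?_
  rw [lpNorm_two_eq_sqrt_integral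
    ((h.continuous_space ht).sub (h.continuous_space ha)).aestronglyMeasurable]
  simp

-- The estimate restarts from the last time `g ≤ t` in `G`: there is no `G` between `g` and `r`.
theorem exists_eventually_lpNorm_sub_le (h : IsSchrodingerSolution u V L A) {G : Set ℝ} {n M K : ℝ}
    (hM : ∀ t ∈ Icc (0 : ℝ) 1, ∀ x, ‖u x t‖ ≤ M) (hG : IsClosed G) (ha : a ∈ G) (hb : b ≤ 1)
    (hGn : G ∩ Icc a b ⊆ speedLeTimes u n) (hR : ∀ t ∈ Ico a b \ G, RightLipschitzAt u t)
    (hK : √(2 * π) * (n + 2 * L * M) < K) (m : ℕ) (ht : t ∈ Ico a b) :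
    ∃ g ∈ Icc a t, ∀ᶠ r in 𝓝[>] t, lpNorm ((u · r) - (u · g)) 2
      (volume.restrict (𝕋 ∩ lipschitzPoints u m)) ≤ K * (r - g) := by
  have haS : a ∈ speedLeTimes u n := hGn ⟨ha, le_rfl, ht.1.trans ht.2.le⟩
  have hLM : 0 ≤ L * M :=
    mul_nonneg h.potential_bound_nonneg ((norm_nonneg _).trans (hM a haS.1 0))
  by_cases htG : t ∈ G
  · exact ⟨t, right_mem_Icc.2 ht.1, h.eventually_lpNorm_sub_le m
      (lt_of_le_of_lt (by gcongr; linarith) hK) (hGn ⟨htG, Ico_subset_Icc_self ht⟩)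
      (ht.2.trans_le hb)⟩
  · obtain ⟨g, ⟨hgG, hgt⟩, hg⟩ := exists_mem_eventually_Ioo_subset_compl hG ha ht.1 htG
    have hgS := hGn ⟨hgG, hgt.1, hgt.2.trans ht.2.le⟩
    refine ⟨g, hgt, ?_⟩
    filter_upwards [hg, Ioc_mem_nhdsGT ht.2] with r hr hrb
    have hgr : g ≤ r := hgt.2.trans hrb.1.le
    have hgap := h.lpNorm_sub_le_of_forall_rightLipschitzAt hM hgS (hrb.2.trans hb)
      (fun q hq => hR q ⟨⟨hgt.1.trans hq.1.le, hq.2.trans_le hrb.2⟩, hr hq⟩)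
      (right_mem_Icc.2 hgr)
    calc _ ≤ _ := lpNorm_mono_measure ((h.memLp ⟨hgS.1.1.trans hgr, hrb.2.trans hb⟩).sub
            (h.memLp hgS.1)) (Measure.restrict_mono inter_subset_left le_rfl)
      _ ≤ _ := hgap
      _ ≤ _ := mul_le_mul_of_nonneg_right hK.le (sub_nonneg.2 hgr)

theorem lpNorm_sub_le_on_lipschitzPoints (h : IsSchrodingerSolution u V L A) {G : Set ℝ} {n M K : ℝ}
    (hM : ∀ t ∈ Icc (0 : ℝ) 1, ∀ x, ‖u x t‖ ≤ M) (hG : IsClosed G) (ha : a ∈ G) (hb : b ≤ 1)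
    (hGn : G ∩ Icc a b ⊆ speedLeTimes u n) (hR : ∀ t ∈ Ico a b \ G, RightLipschitzAt u t)
    (hK : √(2 * π) * (n + 2 * L * M) < K) (m : ℕ) (ht : t ∈ Icc a b) :
    lpNorm ((u · t) - (u · a)) 2 (volume.restrict (𝕋 ∩ lipschitzPoints u m)) ≤ K * (t - a) := by
  have haS : a ∈ speedLeTimes u n := hGn ⟨ha, le_rfl, ht.1.trans ht.2⟩
  have hsub : Icc a b ⊆ Icc 0 1 := Icc_subset_Icc haS.1.1 hb
  set s := {t | lpNorm ((u · t) - (u · a)) 2 (volume.restrict (𝕋 ∩ lipschitzPoints u m))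
    ≤ K * (t - a)}
  suffices Icc a b ⊆ s from this ht
  refine IsClosed.Icc_subset_of_forall_mem_nhdsGT_of_Icc_subset ?_ (by simp [s]) fun t ht hts => ?_
  · rw [inter_comm]
    exact isClosed_Icc.isClosed_le ((h.continuousOn_lpNorm_sub (isCompact_Icc.inter_right
      (h.isClosed_lipschitzPoints m)) haS.1).mono hsub) (by fun_prop)
  obtain ⟨g, hgt, hg⟩ := h.exists_eventually_lpNorm_sub_le hM hG ha hb hGn hR hK m ht
  filter_upwards [hg, Ioc_mem_nhdsGT ht.2] with r hr hrb
  exact h.lpNorm_restrict_sub_le_trans (hsub ⟨hgt.1, hgt.2.trans ht.2.le⟩)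
    (hsub ⟨ht.1.trans hrb.1.le, hrb.2⟩) (hts hgt) hr

theorem lpNorm_le_of_forall_lpNorm_lipschitzPoints_le (h : IsSchrodingerSolution u V L A)
    {f : ℝ → ℂ} {K : ℝ} (hf : MemLp f 2 (volume.restrict 𝕋))
    (hK : ∀ m, lpNorm f 2 (volume.restrict (𝕋 ∩ lipschitzPoints u m)) ≤ K) :
    lpNorm f 2 (volume.restrict 𝕋) ≤ K := by
  have hunion : ⋃ m, 𝕋 ∩ lipschitzPoints u m = 𝕋 := by
    rw [← inter_iUnion, h.iUnion_lipschitzPoints, inter_univ]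
  have hlim := tendsto_setIntegral_of_monotone (μ := volume) (f := fun x => ‖f x‖ ^ 2)
    (fun m => measurableSet_Icc.inter (h.isClosed_lipschitzPoints m).measurableSet)
    (fun m m' hm => inter_subset_inter_right _ (monotone_lipschitzPoints u hm))
    (by rw [hunion]; exact hf.integrable_norm_pow two_ne_zero)
  rw [hunion] at hlim
  rw [lpNorm_two_eq_sqrt_integral hf.1]
  refine le_of_tendsto' hlim.sqrt fun m => ?_
  rw [← lpNorm_two_eq_sqrt_integral (hf.1.mono_measure
    (Measure.restrict_mono inter_subset_left le_rfl))]
  exact hK m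

theorem rightLipschitzAt_of_isClosed (h : IsSchrodingerSolution u V L A) {G : Set ℝ} {n : ℝ}
    (hG : IsClosed G) (ha : a ∈ G) (hab : a < b) (hb : b ≤ 1)
    (hGn : G ∩ Icc a b ⊆ speedLeTimes u n) (hR : ∀ t ∈ Ico a b \ G, RightLipschitzAt u t) :
    RightLipschitzAt u a := by
  obtain ⟨M, hM⟩ := h.exists_norm_le
  obtain ⟨K, hK⟩ := exists_gt (√(2 * π) * (n + 2 * L * M))
  have haS : a ∈ speedLeTimes u n := hGn ⟨ha, le_rfl, hab.le⟩
  refine IsBigO.of_bound K ?_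
  filter_upwards [Ioc_mem_nhdsGT hab] with t ht
  rw [norm_of_nonneg lpNorm_nonneg, norm_of_nonneg (sub_nonneg.2 ht.1.le)]
  exact h.lpNorm_le_of_forall_lpNorm_lipschitzPoints_le
    ((h.memLp ⟨haS.1.1.trans ht.1.le, ht.2.trans hb⟩).sub (h.memLp haS.1))
    fun m => h.lpNorm_sub_le_on_lipschitzPoints hM hG ha hb hGn hR hK m (Ioc_subset_Icc_self ht)

theorem rightLipschitzAt (h : IsSchrodingerSolution u V L A) (ha : a ∈ Ico (0 : ℝ) 1) :
    RightLipschitzAt u a := by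
  by_contra hbad
  set G := closure {s ∈ Ico (0 : ℝ) 1 | ¬RightLipschitzAt u s}
  have hG01 : G ⊆ Icc 0 1 := closure_minimal (fun s hs => Ico_subset_Icc_self hs.1) isClosed_Icc
  have hcover : G ⊆ ⋃ n : ℕ, speedLeTimes u n :=
    fun s hs => mem_iUnion.2 (h.exists_mem_speedLeTimes (hG01 hs))
  have : CompleteSpace G := isClosed_closure.completeSpace_coe
  obtain ⟨n, U, hU, hGU, hGn⟩ := exists_isOpen_inter_nonempty_subset_of_subset_iUnion
    (G := G) ⟨a, subset_closure ⟨ha, hbad⟩⟩ (fun n : ℕ => h.isClosed_speedLeTimes n) hcover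
  obtain ⟨c, ⟨hc, hcbad⟩, hcU⟩ := (closure_inter_open_nonempty_iff hU).1 hGU
  obtain ⟨b, hcb, hbU⟩ := mem_nhdsGE_iff_exists_Icc_subset.1
    (nhdsWithin_le_nhds (hU.mem_nhds hcU))
  refine hcbad (h.rightLipschitzAt_of_isClosed (n := n) isClosed_closure
    (subset_closure ⟨hc, hcbad⟩ : c ∈ G)
    (b := min b 1) (lt_min hcb hc.2) (min_le_right _ _) (fun s hs => ?_) fun s hs => ?_)
  · exact hGn ⟨hs.1, hbU ⟨hs.2.1, hs.2.2.trans (min_le_left _ _)⟩⟩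
  · by_contra hsbad
    exact hs.2 (subset_closure
      ⟨⟨hc.1.trans hs.1.1, hs.1.2.trans_le (min_le_right _ _)⟩, hsbad⟩)

end IsSchrodingerSolution

/-! ### Mass balance against a moving weight -/

namespace IsSchrodingerSolution

variable {u V : ℝ → ℝ → ℂ} {L A : ℝ} {a b s t : ℝ}

theorem abs_integral_mul_inner_time_deriv_le (h : IsSchrodingerSolution u V L A)
    (ht : t ∈ Ico (0 : ℝ) 1) {χ : ℝ → ℝ} {B₀ B₁ : ℝ} (hχ : ContDiff ℝ 1 χ)
    (pχ : Function.Periodic χ (2 * π)) (hB₀ : ∀ y, |χ y| ≤ B₀) (hB₁ : ∀ y, |deriv χ y| ≤ B₁) :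
    |∫ y in 𝕋, χ y * (2 * inner ℝ (u y t) (deriv (u y) t))| ≤ (B₁ + 2 * L * B₀) * A ^ 2 := by
  have ht' := Ico_subset_Icc_self ht
  have hu := h.continuous_space ht'
  have hu' := h.continuous_deriv_space ht'
  have hcχ := hχ.continuous
  have : Continuous (deriv χ) := hχ.continuous_deriv le_rfl
  have hL := h.potential_bound_nonneg
  have hB₀' : 0 ≤ B₀ := (abs_nonneg _).trans (hB₀ 0)
  have hB₁' : 0 ≤ B₁ := (abs_nonneg _).trans (hB₁ 0)
  have hflux := abs_integral_mul_inner_le_of_norm_sub_le (R := fun y => L * ‖u y t‖)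
    two_pi_pos.le (h.contDiff_space t ht') hχ (h.periodic t) pχ
    (h.measurable_time_deriv ht).aestronglyMeasurable (by fun_prop) (h.norm_time_deriv_sub_le ht')
  have hpoint : ∀ y, |deriv χ y| * (‖u y t‖ * ‖deriv (u · t) y‖)
      + |χ y| * (‖u y t‖ * (L * ‖u y t‖))
      ≤ (B₁ / 2 + L * B₀) * (‖u y t‖ ^ 2 + ‖deriv (u · t) y‖ ^ 2) := fun y => by
    have hcross : ‖u y t‖ * ‖deriv (u · t) y‖ ≤ (‖u y t‖ ^ 2 + ‖deriv (u · t) y‖ ^ 2) / 2 := by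
      linarith [two_mul_le_add_sq ‖u y t‖ ‖deriv (u · t) y‖]
    calc _ ≤ B₁ * ((‖u y t‖ ^ 2 + ‖deriv (u · t) y‖ ^ 2) / 2)
          + B₀ * (‖u y t‖ * (L * ‖u y t‖)) := by
          gcongr
          exacts [hB₁ y, hB₀ y]
      _ ≤ _ := by linarith [show 0 ≤ B₀ * L * ‖deriv (u · t) y‖ ^ 2 by positivity]
  have hmono := setIntegral_mono (μ := volume) (s := 𝕋)
    (Continuous.integrableOn_Icc (by fun_prop)) (Continuous.integrableOn_Icc (by fun_prop)) hpoint
  rw [integral_const_mul] at hmono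
  have hA := mul_le_mul_of_nonneg_left (h.integral_le t ht')
    (by positivity : 0 ≤ B₁ / 2 + L * B₀)
  simp only [mul_left_comm _ (2 : ℝ), integral_const_mul, abs_mul, abs_two]
  linarith

theorem integrableOn_mul_inner_time_deriv (h : IsSchrodingerSolution u V L A)
    (ht : t ∈ Ico (0 : ℝ) 1) {χ : ℝ → ℝ} {B : ℝ} (hχ : Continuous χ) (hB : ∀ y, |χ y| ≤ B) :
    IntegrableOn (fun y => χ y * (2 * inner ℝ (u y t) (deriv (u y) t))) 𝕋 := by
  have ht' := Ico_subset_Icc_self ht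
  obtain ⟨M, hM⟩ := h.exists_norm_le
  obtain ⟨n, -, hn⟩ := h.exists_mem_speedLeTimes ht'
  have hu := (h.continuous_space ht').aestronglyMeasurable (μ := volume.restrict 𝕋)
  have hB0 : 0 ≤ B := (abs_nonneg _).trans (hB 0)
  have hM0 : 0 ≤ M := (norm_nonneg _).trans (hM t ht' 0)
  refine Integrable.of_bound (C := B * (2 * (M * n))) (hχ.aestronglyMeasurable.mul
    ((hu.inner (h.measurable_time_deriv ht).aestronglyMeasurable).const_mul 2))
    (ae_of_all _ fun y => ?_)
  rw [norm_mul, norm_mul, norm_ofNat, norm_eq_abs]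
  gcongr
  · exact hB y
  · exact (norm_inner_le_norm _ _).trans (mul_le_mul (hM t ht' y) (hn y) (norm_nonneg _) hM0)

theorem hasDerivWithinAt_integral_weight (h : IsSchrodingerSolution u V L A)
    (hs : s ∈ Ico a b) (hI : Icc a b ⊆ Icc 0 1) {Ψ ρ : ℝ → ℝ → ℝ} {B C : ℝ}
    (hΨ : ∀ s, Continuous (Ψ s)) (hB : ∀ s ∈ Icc a b, ∀ y, |Ψ s y| ≤ B)
    (hC : ∀ s y, |ρ s y| ≤ C) (dΨ : ∀ s y, HasDerivAt (Ψ · y) (-ρ s y) s) :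
    HasDerivWithinAt (fun s => ∫ y in 𝕋, Ψ s y * ‖u y s‖ ^ 2)
      (∫ y in 𝕋, (-ρ s y * ‖u y s‖ ^ 2 + Ψ s y * (2 * inner ℝ (u y s) (deriv (u y) s))))
      (Ioi s) s := by
  have hs01 : s ∈ Ico (0 : ℝ) 1 :=
    ⟨(hI (Ico_subset_Icc_self hs)).1, hs.2.trans_le (hI (right_mem_Icc.2 (hs.1.trans hs.2.le))).2⟩
  have hmem : ∀ᶠ r in 𝓝[≥] s, r ∈ Icc a b := by
    filter_upwards [Icc_mem_nhdsGE hs.2] with r hr using ⟨hs.1.trans hr.1, hr.2⟩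
  have hlip : ∀ r y, |Ψ r y - Ψ s y| ≤ C * |r - s| := fun r y =>
    convex_univ.norm_image_sub_le_of_norm_hasDerivWithin_le
      (fun q _ => (dΨ q y).hasDerivWithinAt) (fun q _ => by simpa using hC q y) (mem_univ _)
      (mem_univ _)
  have hlip_right : ∀ᶠ r in 𝓝[>] s, ∀ y, |Ψ r y - Ψ s y| ≤ C * (r - s) := by
    filter_upwards [self_mem_nhdsWithin] with r hr y
    simpa only [abs_of_pos (sub_pos.2 (mem_Ioi.1 hr))] using hlip r y
  simpa only [Pi.zero_apply, sub_zero] using h.hasDerivWithinAt_integral hs01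
    (h.rightLipschitzAt hs01) hΨ (hmem.mono hB)
    hlip_right (fun y => (dΨ s y).hasDerivWithinAt) (w := 0) continuous_zero (N := 0) (by simp)

theorem integral_weight_mul_norm_sq_le (h : IsSchrodingerSolution u V L A) (hab : a ≤ b)
    (hI : Icc a b ⊆ Icc 0 1) {Ψ ρ : ℝ → ℝ → ℝ} {B₀ B₁ C : ℝ} (hΨ : ∀ s, ContDiff ℝ 1 (Ψ s))
    (pΨ : ∀ s, Function.Periodic (Ψ s) (2 * π)) (hB₀ : ∀ s ∈ Icc a b, ∀ y, |Ψ s y| ≤ B₀)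
    (hB₁ : ∀ s y, |deriv (Ψ s) y| ≤ B₁) (hρ : ∀ s, Continuous (ρ s))
    (hρ' : ∀ y, Continuous (ρ · y)) (hC : ∀ s y, |ρ s y| ≤ C)
    (dΨ : ∀ s y, HasDerivAt (Ψ · y) (-ρ s y) s) :
    ∫ y in 𝕋, Ψ a y * ‖u y a‖ ^ 2 ≤ (∫ y in 𝕋, Ψ b y * ‖u y b‖ ^ 2)
      + (∫ s in a..b, ∫ y in 𝕋, ρ s y * ‖u y s‖ ^ 2) + (b - a) * ((B₁ + 2 * L * B₀) * A ^ 2) := by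
  have hcontρ : ContinuousOn (fun s => ∫ y in 𝕋, ρ s y * ‖u y s‖ ^ 2) (Icc a b) := by
    simpa only [Pi.zero_apply, sub_zero] using h.continuousOn_integral isCompact_Icc hρ hρ' hI
      (fun s _ => hC s) (w := 0) continuous_zero (N := 0) (by simp)
  have hcontΨ : ContinuousOn (fun s => ∫ y in 𝕋, Ψ s y * ‖u y s‖ ^ 2) (Icc a b) := by
    simpa only [Pi.zero_apply, sub_zero] using h.continuousOn_integral isCompact_Icc
      (fun s => (hΨ s).continuous) (fun y => continuous_iff_continuousAt.2 fun s =>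
      (dΨ s y).continuousAt) hI hB₀ (w := 0) continuous_zero (N := 0) (by simp)
  have hdrop := intervalIntegral.sub_le_integral_of_hasDeriv_right_of_le hab hcontΨ.neg
    (fun s hs => (h.hasDerivWithinAt_integral_weight (Ioo_subset_Ico_self hs) hI
      (fun s => (hΨ s).continuous) hB₀ hC dΨ).neg)
    (φ := fun s => (∫ y in 𝕋, ρ s y * ‖u y s‖ ^ 2) + (B₁ + 2 * L * B₀) * A ^ 2)
    (hcontρ.add continuousOn_const).integrableOn_Icc fun s hs => by
      have hsI := Ioo_subset_Icc_self hs
      have hs01 : s ∈ Ico (0 : ℝ) 1 := ⟨(hI hsI).1, hs.2.trans_le (hI (right_mem_Icc.2 hab)).2⟩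
      have hu := h.continuous_space (hI hsI)
      have hρs := hρ s
      have hflux := h.abs_integral_mul_inner_time_deriv_le hs01 (hΨ s) (pΨ s) (hB₀ s hsI) (hB₁ s)
      rw [integral_add (Continuous.integrableOn_Icc (by fun_prop))
        (h.integrableOn_mul_inner_time_deriv hs01 (hΨ s).continuous (hB₀ s hsI))]
      simp only [neg_mul, integral_neg]
      linarith [(abs_le.1 hflux).1]
  rw [intervalIntegral.integral_add (hcontρ.intervalIntegrable_of_Icc hab) (by simp),
    intervalIntegral.integral_const, smul_eq_mul] at hdrop
  simp only [Pi.neg_apply] at hdrop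
  linarith

theorem integral_norm_sq_le_add (h : IsSchrodingerSolution u V L A) (ht : t ∈ Icc (0 : ℝ) 1) :
    ∫ y in 𝕋, ‖u y 0‖ ^ 2 ≤ (∫ y in 𝕋, ‖u y t‖ ^ 2) + t * (2 * L * A ^ 2) := by
  simpa using h.integral_weight_mul_norm_sq_le ht.1 (Icc_subset_Icc_right ht.2)
    (Ψ := fun _ _ => 1) (ρ := 0) (B₀ := 1) (B₁ := 0) (C := 0) (fun _ => contDiff_const)
    (fun _ _ => rfl) (by simp) (by simp) (fun _ => continuous_zero) (fun _ => continuous_zero)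
    (by simp) (fun _ _ => by simpa using hasDerivAt_const ..)

end IsSchrodingerSolution

/-! ### The sweeping weight -/

/-- The mass of `χ` ahead of its translate by `2πσ/t`, up to two full turns. As `σ` runs through
`[t, 2t]` the translate sweeps the circle once, and the weight decreases from the full mass of `χ`
over a period to `0`, at the rate `χ (y + 2πσ/t)`. -/
def sweptWeight (χ : ℝ → ℝ) (t σ y : ℝ) : ℝ :=
  ∫ x in (y + 2 * π * (σ / t))..(y + 4 * π), χ x

section SweptWeight

variable {χ : ℝ → ℝ} {t σ : ℝ}

theorem hasDerivAt_sweptWeight (hχ : Continuous χ) (y : ℝ) :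
    HasDerivAt (sweptWeight χ t σ) (χ (y + 4 * π) - χ (y + 2 * π * (σ / t))) y := by
  have hP := fun x : ℝ => (hχ.integral_hasStrictDerivAt 0 x).hasDerivAt
  have heq : sweptWeight χ t σ = fun y =>
      (∫ x in (0 : ℝ)..(y + 4 * π), χ x) - ∫ x in (0 : ℝ)..(y + 2 * π * (σ / t)), χ x := by
    ext y
    exact (intervalIntegral.integral_interval_sub_left (hχ.intervalIntegrable _ _)
      (hχ.intervalIntegrable _ _)).symm
  rw [heq]
  exact ((hP _).comp_add_const y _).sub ((hP _).comp_add_const y _)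

theorem deriv_sweptWeight (hχ : Continuous χ) :
    deriv (sweptWeight χ t σ) = fun y => χ (y + 4 * π) - χ (y + 2 * π * (σ / t)) :=
  funext fun y => (hasDerivAt_sweptWeight hχ y).deriv

theorem contDiff_sweptWeight (hχ : Continuous χ) : ContDiff ℝ 1 (sweptWeight χ t σ) := by
  rw [contDiff_one_iff_deriv, deriv_sweptWeight hχ]
  exact ⟨fun y => (hasDerivAt_sweptWeight hχ y).differentiableAt, by fun_prop⟩

theorem abs_deriv_sweptWeight_le_one (hχ : Continuous χ) (hχ01 : ∀ y, χ y ∈ Icc 0 1) (y : ℝ) :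
    |deriv (sweptWeight χ t σ) y| ≤ 1 := by
  rw [deriv_sweptWeight hχ]
  simpa using abs_sub_le_of_le_of_le (hχ01 _).1 (hχ01 _).2 (hχ01 _).1 (hχ01 _).2

theorem hasDerivAt_sweptWeight_time (hχ : Continuous χ) (y : ℝ) :
    HasDerivAt (sweptWeight χ t · y) (-(2 * π / t * χ (y + 2 * π * (σ / t)))) σ := by
  have hpos : HasDerivAt (fun σ : ℝ => y + 2 * π * (σ / t)) (2 * π / t) σ := by
    simpa [div_eq_mul_inv] using (((hasDerivAt_id σ).div_const t).const_mul (2 * π)).const_add y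
  exact ((intervalIntegral.integral_hasDerivAt_left (hχ.intervalIntegrable _ (y + 4 * π))
    (hχ.stronglyMeasurableAtFilter _ _) hχ.continuousAt).comp σ hpos).congr_deriv (by ring)

theorem periodic_sweptWeight (pχ : Function.Periodic χ (2 * π)) :
    Function.Periodic (sweptWeight χ t σ) (2 * π) := fun y => by
  simp only [sweptWeight, add_right_comm y (2 * π)]
  rw [← intervalIntegral.integral_comp_add_right]
  simp only [pχ _]

theorem sweptWeight_self (pχ : Function.Periodic χ (2 * π)) (ht : t ≠ 0) (y : ℝ) :
    sweptWeight χ t t y = ∫ x in 0..(2 * π), χ x := by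
  rw [sweptWeight, div_self ht, mul_one, show y + 4 * π = (y + 2 * π) + 2 * π by ring,
    pχ.intervalIntegral_add_eq (y + 2 * π) 0, zero_add]

theorem sweptWeight_two_mul_self (ht : t ≠ 0) (y : ℝ) : sweptWeight χ t (2 * t) y = 0 := by
  rw [sweptWeight, mul_div_cancel_right₀ _ ht, show 2 * π * 2 = 4 * π by ring,
    intervalIntegral.integral_same]

theorem sweptWeight_mem_Icc (hχ : Continuous χ) (pχ : Function.Periodic χ (2 * π))
    (hχ0 : ∀ y, 0 ≤ χ y) (ht : 0 < t) (hσ : σ ∈ Icc t (2 * t)) (y : ℝ) :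
    sweptWeight χ t σ y ∈ Icc 0 (∫ x in 0..(2 * π), χ x) := by
  have hanti : Antitone (sweptWeight χ t · y) :=
    antitone_of_hasDerivAt_nonpos (fun s => hasDerivAt_sweptWeight_time hχ y) fun s => by
      have := hχ0 (y + 2 * π * (s / t))
      simp only [Pi.zero_apply, Left.neg_nonpos_iff]
      positivity
  exact ⟨(sweptWeight_two_mul_self ht.ne' y).symm.trans_le (hanti hσ.2),
    (hanti hσ.1).trans_eq (sweptWeight_self pχ ht.ne' y)⟩

end SweptWeight

theorem IsSchrodingerSolution.integral_mul_integral_norm_sq_le {u V : ℝ → ℝ → ℂ} {L A t : ℝ}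
    {χ : ℝ → ℝ} (h : IsSchrodingerSolution u V L A) (hχ : Continuous χ)
    (pχ : Function.Periodic χ (2 * π)) (hχ01 : ∀ y, χ y ∈ Icc 0 1) (ht : 0 < t)
    (ht1 : 2 * t ≤ 1) :
    (∫ x in 0..(2 * π), χ x) * ∫ y in 𝕋, ‖u y t‖ ^ 2
      ≤ 2 * π / t * (∫ s in t..(2 * t), ∫ y in 𝕋, χ (y + 2 * π * (s / t)) * ‖u y s‖ ^ 2)
        + t * ((1 + 2 * L * ∫ x in 0..(2 * π), χ x) * A ^ 2) := by
  have hbound : ∀ s ∈ Icc t (2 * t), ∀ y, |sweptWeight χ t s y| ≤ ∫ x in 0..(2 * π), χ x :=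
    fun s hs y => by
      have hmem := sweptWeight_mem_Icc hχ pχ (fun y => (hχ01 y).1) ht hs y
      exact (abs_of_nonneg hmem.1).trans_le hmem.2
  have hsweep := h.integral_weight_mul_norm_sq_le (by linarith) (Icc_subset_Icc ht.le ht1)
    (Ψ := sweptWeight χ t) (ρ := fun s y => 2 * π / t * χ (y + 2 * π * (s / t)))
    (C := 2 * π / t) (fun _ => contDiff_sweptWeight hχ) (fun _ => periodic_sweptWeight pχ) hbound
    (fun _ => abs_deriv_sweptWeight_le_one hχ hχ01) (fun _ => by fun_prop) (fun _ => by fun_prop)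
    (fun s y => by
      have := hχ01 (y + 2 * π * (s / t))
      rw [abs_of_nonneg (mul_nonneg (by positivity) this.1)]
      exact mul_le_of_le_one_right (by positivity) this.2)
    (fun _ => hasDerivAt_sweptWeight_time hχ)
  simp only [sweptWeight_self pχ ht.ne', sweptWeight_two_mul_self ht.ne', zero_mul, integral_zero,
    zero_add, mul_assoc (2 * π / t), integral_const_mul,
    intervalIntegral.integral_const_mul] at hsweep
  linarith

/-- A `2π`-periodic cutoff around `2πℤ` at scale `√t`, supported in the `8π√t`-neighbourhood. -/
def cutoff (t y : ℝ) : ℝ :=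
  max 0 (1 - (1 - cos y) / (128 * t))

section Cutoff

variable {t y : ℝ}

theorem continuous_cutoff : Continuous (cutoff t) := by
  unfold cutoff
  fun_prop

theorem periodic_cutoff : Function.Periodic (cutoff t) (2 * π) := fun y => by
  simp only [cutoff, cos_add_two_pi]

theorem cutoff_mem_Icc (ht : 0 < t) : cutoff t y ∈ Icc 0 1 :=
  ⟨le_max_left _ _, max_le zero_le_one <| sub_le_self _ <|
    div_nonneg (sub_nonneg.2 (cos_le_one y)) (by positivity)⟩

theorem one_sub_cos_lt_of_cutoff_ne_zero (ht : 0 < t) (h : cutoff t y ≠ 0) :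
    1 - cos y < 128 * t := by
  contrapose! h
  exact max_eq_left (sub_nonpos.2 ((one_le_div (by positivity)).2 h))

theorem abs_lt_of_cutoff_ne_zero (ht : 0 < t) (hy : |y| ≤ π) (h : cutoff t y ≠ 0) :
    |y| < 8 * π * √t := by
  have hquad : 2 / π ^ 2 * y ^ 2 < 128 * t := by
    linarith [one_sub_cos_lt_of_cutoff_ne_zero ht h, cos_le_one_sub_mul_cos_sq hy]
  rw [div_mul_eq_mul_div, div_lt_iff₀ (by positivity)] at hquad
  refine abs_lt_of_sq_lt_sq ?_ (by positivity)
  rw [mul_pow, sq_sqrt ht.le]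
  linarith

theorem abs_sub_two_pi_mul_round_le (y : ℝ) : |y - 2 * π * round (y / (2 * π))| ≤ π := by
  have hscale : y - 2 * π * round (y / (2 * π))
      = (y / (2 * π) - round (y / (2 * π))) * (2 * π) := by
    field_simp
  rw [hscale, abs_mul, abs_of_pos two_pi_pos]
  nlinarith [abs_sub_round (y / (2 * π)), pi_pos]

theorem exists_int_abs_sub_lt_of_cutoff_ne_zero (ht : 0 < t) (h : cutoff t y ≠ 0) :
    ∃ k : ℤ, |y - 2 * π * k| < 8 * π * √t := by
  refine ⟨round (y / (2 * π)), abs_lt_of_cutoff_ne_zero ht (abs_sub_two_pi_mul_round_le y) ?_⟩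
  rwa [mul_comm (2 * π), periodic_cutoff.sub_int_mul_eq]

theorem three_quarters_le_cutoff (ht : 0 < t) (hy : y ∈ Icc 0 (8 * √t)) : 3 / 4 ≤ cutoff t y := by
  have hsq : y ^ 2 ≤ 64 * t := by
    calc y ^ 2 ≤ (8 * √t) ^ 2 := by gcongr; exacts [hy.1, hy.2]
      _ = 64 * t := by rw [mul_pow, sq_sqrt ht.le]; norm_num
  have hcos : (1 - cos y) / (128 * t) ≤ 1 / 4 := by
    rw [div_le_iff₀ (by positivity)]
    linarith [one_sub_sq_div_two_le_cos (x := y)]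
  exact le_max_of_le_right (by linarith)

theorem six_mul_sqrt_le_integral_cutoff (ht : 0 < t) (hsmall : 8 * √t ≤ 2 * π) :
    6 * √t ≤ ∫ y in 0..(2 * π), cutoff t y := by
  have hcont := continuous_cutoff (t := t)
  calc 6 * √t = ∫ _ in 0..(8 * √t), (3 / 4 : ℝ) := by
        rw [intervalIntegral.integral_const, smul_eq_mul]; ring
    _ ≤ ∫ y in 0..(8 * √t), cutoff t y :=
        intervalIntegral.integral_mono_on (by positivity) (by simp) (hcont.intervalIntegrable _ _)
          fun y hy => three_quarters_le_cutoff ht hy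
    _ ≤ ∫ y in 0..(2 * π), cutoff t y :=
        intervalIntegral.integral_mono_interval le_rfl (by positivity) hsmall
          (ae_of_all _ fun y => (cutoff_mem_Icc ht).1) (hcont.intervalIntegrable _ _)

end Cutoff

/-! ### Observation in the tube -/

/-- The `8π√t`-neighbourhood modulo `2π` of the two points `∓2πs/t`. -/
def tube (t s : ℝ) : Set ℝ :=
  {y | (∃ k : ℤ, |y + 2 * π * (s / t) - 2 * π * k| < 8 * π * √t) ∨
    ∃ k : ℤ, |y - 2 * π * (s / t) - 2 * π * k| < 8 * π * √t}

theorem isOpen_setOf_mem_tube (t : ℝ) : IsOpen {p : ℝ × ℝ | p.1 ∈ tube t p.2} := by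
  have hunion : {p : ℝ × ℝ | p.1 ∈ tube t p.2} =
      (⋃ k : ℤ, {p | |p.1 + 2 * π * (p.2 / t) - 2 * π * k| < 8 * π * √t}) ∪
        ⋃ k : ℤ, {p | |p.1 - 2 * π * (p.2 / t) - 2 * π * k| < 8 * π * √t} := by
    ext p
    simp [tube]
  rw [hunion]
  exact (isOpen_iUnion fun k => isOpen_lt (by fun_prop) continuous_const).union
    (isOpen_iUnion fun k => isOpen_lt (by fun_prop) continuous_const)

theorem measurableSet_tube (t s : ℝ) : MeasurableSet (tube t s) :=
  ((isOpen_setOf_mem_tube t).preimage (f := fun y : ℝ => (y, s)) (by fun_prop)).measurableSet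

/-- The observed quantity at time `s`: the mass and the weighted gradient energy of `u(·, s)` in the
part of `tube t s` lying in `[0, 2π]`. -/
def tubeMass (u : ℝ → ℝ → ℂ) (t s : ℝ) : ℝ :=
  ∫ y in 𝕋 ∩ tube t s, (‖u y s‖ ^ 2 + s * ‖deriv (u · s) y‖ ^ 2)

theorem tubeMass_nonneg {u : ℝ → ℝ → ℂ} {t s : ℝ} (hs : 0 ≤ s) : 0 ≤ tubeMass u t s :=
  integral_nonneg fun y => by positivity

theorem measurable_uncurry_deriv_of_measurable_uncurry {E : Type*} [NormedAddCommGroup E]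
    [NormedSpace ℝ E] [MeasurableSpace E] [BorelSpace E] [SecondCountableTopology E]
    {α : Type*} [MeasurableSpace α] {f : ℝ → α → E} (hf : Measurable (Function.uncurry f))
    (hd : ∀ a, Differentiable ℝ (f · a)) :
    Measurable fun p : ℝ × α => deriv (f · p.2) p.1 := by
  refine measurable_of_tendsto_metrizable (f := fun (n : ℕ) p =>
    (1 / (n + 1 : ℝ))⁻¹ • (f (p.1 + 1 / (n + 1)) p.2 - f p.1 p.2)) (fun n => ?_)
    (tendsto_pi_nhds.2 fun p => ?_)
  · have hshift : Measurable fun p : ℝ × α => f (p.1 + 1 / (n + 1)) p.2 :=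
      hf.comp ((measurable_fst.add_const _).prodMk measurable_snd)
    exact (hshift.sub hf).const_smul _
  · exact (hd p.2 p.1).hasDerivAt.tendsto_slope_zero.comp (tendsto_nhdsWithin_iff.2
      ⟨tendsto_one_div_add_atTop_nhds_zero_nat, .of_forall fun n => (by positivity :
        (0 : ℝ) < 1 / (n + 1)).ne'⟩)

namespace IsSchrodingerSolution

variable {u V : ℝ → ℝ → ℂ} {L A : ℝ} {s t : ℝ}

theorem measurable_uncurry_projIcc (h : IsSchrodingerSolution u V L A) :
    Measurable (Function.uncurry fun y s => u y (projIcc (0 : ℝ) 1 zero_le_one s)) :=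
  measurable_uncurry_of_continuous_of_measurable
    (fun s => h.continuous_space (projIcc (0 : ℝ) 1 zero_le_one s).2) fun y =>
    ((h.contDiff_time y).continuous.comp
      (continuous_subtype_val.comp continuous_projIcc)).measurable

theorem measurable_deriv_projIcc (h : IsSchrodingerSolution u V L A) :
    Measurable fun p : ℝ × ℝ => deriv (u · (projIcc (0 : ℝ) 1 zero_le_one p.2)) p.1 :=
  measurable_uncurry_deriv_of_measurable_uncurry h.measurable_uncurry_projIcc fun s =>
    (h.contDiff_space _ (projIcc (0 : ℝ) 1 zero_le_one s).2).differentiable two_ne_zero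

theorem aestronglyMeasurable_tubeMass (h : IsSchrodingerSolution u V L A) (t : ℝ) :
    AEStronglyMeasurable (tubeMass u t) (volume.restrict (Icc 0 1)) := by
  set F : ℝ × ℝ → ℝ := {p | p.1 ∈ tube t p.2}.indicator fun p =>
    ‖u p.1 (projIcc (0 : ℝ) 1 zero_le_one p.2)‖ ^ 2
      + p.2 * ‖deriv (u · (projIcc (0 : ℝ) 1 zero_le_one p.2)) p.1‖ ^ 2 with hF
  have hFm : StronglyMeasurable F :=
    (((h.measurable_uncurry_projIcc.norm.pow_const 2).add (measurable_snd.mul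
      (h.measurable_deriv_projIcc.norm.pow_const 2))).indicator
        (isOpen_setOf_mem_tube t).measurableSet).stronglyMeasurable
  have hFint : ∀ s ∈ Icc (0 : ℝ) 1, ∫ y in 𝕋, F (y, s) = tubeMass u t s := fun s hs => by
    have hslice : (fun y => F (y, s))
        = (tube t s).indicator fun y => ‖u y s‖ ^ 2 + s * ‖deriv (u · s) y‖ ^ 2 := by
      ext y
      simp only [hF, indicator, mem_ofPred_eq, projIcc_of_mem _ hs]
    rw [hslice, setIntegral_indicator (measurableSet_tube t s), tubeMass]
  exact hFm.integral_prod_left'.aestronglyMeasurable.congr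
    (ae_restrict_of_forall_mem measurableSet_Icc hFint)

theorem tubeMass_le (h : IsSchrodingerSolution u V L A) (hs : s ∈ Icc (0 : ℝ) 1) :
    tubeMass u t s ≤ A ^ 2 := by
  have hu := h.continuous_space hs
  have hu' := h.continuous_deriv_space hs
  have hs0 := hs.1
  calc tubeMass u t s ≤ ∫ y in 𝕋, (‖u y s‖ ^ 2 + s * ‖deriv (u · s) y‖ ^ 2) :=
        setIntegral_mono_set (Continuous.integrableOn_Icc (by fun_prop))
          (ae_of_all _ fun y => by simp only [Pi.zero_apply]; positivity)
          inter_subset_left.eventuallyLE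
    _ ≤ ∫ y in 𝕋, (‖u y s‖ ^ 2 + ‖deriv (u · s) y‖ ^ 2) :=
        setIntegral_mono (Continuous.integrableOn_Icc (by fun_prop))
          (Continuous.integrableOn_Icc (by fun_prop)) fun y =>
          add_le_add_right (mul_le_of_le_one_left (by positivity) hs.2) _
    _ ≤ A ^ 2 := h.integral_le s hs

theorem integrableOn_tubeMass (h : IsSchrodingerSolution u V L A) (t : ℝ) :
    IntegrableOn (tubeMass u t) (Icc 0 1) :=
  Integrable.of_bound (h.aestronglyMeasurable_tubeMass t) (A ^ 2)
    (ae_restrict_of_forall_mem measurableSet_Icc fun s hs => by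
      rw [norm_of_nonneg (tubeMass_nonneg hs.1)]
      exact h.tubeMass_le hs)

theorem integral_cutoff_le_tubeMass (h : IsSchrodingerSolution u V L A) (ht : 0 < t)
    (hs : s ∈ Icc (0 : ℝ) 1) :
    ∫ y in 𝕋, cutoff t (y + 2 * π * (s / t)) * ‖u y s‖ ^ 2 ≤ tubeMass u t s := by
  have hu := h.continuous_space hs
  have hu' := h.continuous_deriv_space hs
  have hcut := continuous_cutoff (t := t)
  have hs0 := hs.1
  have henergy : IntegrableOn (fun y => ‖u y s‖ ^ 2 + s * ‖deriv (u · s) y‖ ^ 2) 𝕋 :=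
    Continuous.integrableOn_Icc (by fun_prop)
  rw [tubeMass, ← setIntegral_indicator (measurableSet_tube t s)]
  refine setIntegral_mono (Continuous.integrableOn_Icc (by fun_prop))
    (henergy.indicator (measurableSet_tube t s)) fun y => ?_
  by_cases hy : y ∈ tube t s
  · rw [indicator_of_mem hy]
    exact (mul_le_of_le_one_left (by positivity) (cutoff_mem_Icc ht).2).trans
      (le_add_of_nonneg_right (by positivity))
  · have hzero : cutoff t (y + 2 * π * (s / t)) = 0 := by
      contrapose! hy
      exact Or.inl (exists_int_abs_sub_lt_of_cutoff_ne_zero ht hy)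
    simp only [hzero, zero_mul, indicator_of_notMem hy, le_refl]

theorem integral_integral_cutoff_le (h : IsSchrodingerSolution u V L A) (ht : 0 < t)
    (ht1 : 3 * t ≤ 1) :
    ∫ s in t..(2 * t), ∫ y in 𝕋, cutoff t (y + 2 * π * (s / t)) * ‖u y s‖ ^ 2
      ≤ ∫ s in Icc (t / 4) (3 * t), tubeMass u t s := by
  have hsub : Icc t (2 * t) ⊆ Icc 0 1 := Icc_subset_Icc ht.le (by linarith)
  have hcut := continuous_cutoff (t := t)
  have hcont : ContinuousOn
      (fun s => ∫ y in 𝕋, cutoff t (y + 2 * π * (s / t)) * ‖u y s‖ ^ 2) (Icc t (2 * t)) := by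
    simpa only [Pi.zero_apply, sub_zero] using h.continuousOn_integral
      (Ψ := fun s y => cutoff t (y + 2 * π * (s / t))) isCompact_Icc
      (fun s => by fun_prop) (fun y => by fun_prop) hsub (B := 1)
      (fun s _ y => (abs_of_nonneg (cutoff_mem_Icc ht).1).trans_le (cutoff_mem_Icc ht).2)
      (w := 0) continuous_zero (N := 0) (by simp)
  rw [intervalIntegral.integral_of_le (by linarith), ← integral_Icc_eq_integral_Ioc]
  calc _ ≤ ∫ s in Icc t (2 * t), tubeMass u t s :=
        setIntegral_mono_on hcont.integrableOn_Icc ((h.integrableOn_tubeMass t).mono_set hsub)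
          measurableSet_Icc fun s hs => h.integral_cutoff_le_tubeMass ht (hsub hs)
    _ ≤ _ := setIntegral_mono_set
        ((h.integrableOn_tubeMass t).mono_set (Icc_subset_Icc (by linarith) ht1))
        (ae_restrict_of_forall_mem measurableSet_Icc fun s hs =>
          tubeMass_nonneg (by linarith [hs.1]))
        (Icc_subset_Icc (by linarith) (by linarith)).eventuallyLE

theorem integral_cutoff_mul_integral_norm_sq_le (h : IsSchrodingerSolution u V L A) (ht : 0 < t)
    (ht1 : 3 * t ≤ 1) :
    (∫ y in 0..(2 * π), cutoff t y) * (∫ y in 𝕋, ‖u y 0‖ ^ 2)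
      ≤ 2 * π / t * (∫ s in Icc (t / 4) (3 * t), tubeMass u t s) + t * A ^ 2
        + 4 * ((∫ y in 0..(2 * π), cutoff t y) * (t * L * A ^ 2)) := by
  have hsweep := h.integral_mul_integral_norm_sq_le continuous_cutoff periodic_cutoff
    (fun _ => cutoff_mem_Icc ht) ht (by linarith)
  have hobserved : 2 * π / t * (∫ s in t..(2 * t), ∫ y in 𝕋,
      cutoff t (y + 2 * π * (s / t)) * ‖u y s‖ ^ 2)
      ≤ 2 * π / t * ∫ s in Icc (t / 4) (3 * t), tubeMass u t s := by
    gcongr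
    exact h.integral_integral_cutoff_le ht ht1
  have hX : 0 ≤ ∫ y in 0..(2 * π), cutoff t y :=
    intervalIntegral.integral_nonneg two_pi_pos.le fun y _ => (cutoff_mem_Icc ht).1
  have hgrowth := mul_le_mul_of_nonneg_left
    (h.integral_norm_sq_le_add (t := t) ⟨ht.le, by linarith⟩) hX
  linarith

theorem mul_integral_norm_sq_le_integral_tubeMass (h : IsSchrodingerSolution u V L A) (ht : 0 < t)
    (hA : 128 * √t * A ^ 2 ≤ ∫ y in 𝕋, ‖u y 0‖ ^ 2) (hsmall : 128 * √t ≤ 1)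
    (hL : L * √t ≤ 1) :
    t * √t * (∫ y in 𝕋, ‖u y 0‖ ^ 2) / 2 ≤ ∫ s in Icc (t / 4) (3 * t), tubeMass u t s := by
  have hsq : √t * √t = t := mul_self_sqrt ht.le
  have ht1 : 3 * t ≤ 1 := by nlinarith [sqrt_nonneg t]
  have hsweep := h.integral_cutoff_mul_integral_norm_sq_le ht ht1
  have hX : 6 * √t ≤ ∫ y in 0..(2 * π), cutoff t y :=
    six_mul_sqrt_le_integral_cutoff ht (by linarith [pi_gt_three])
  set m := ∫ y in 𝕋, ‖u y 0‖ ^ 2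
  set X := ∫ y in 0..(2 * π), cutoff t y
  set I := ∫ s in Icc (t / 4) (3 * t), tubeMass u t s
  have hm : 0 ≤ m := by positivity
  have hX0 : 0 ≤ X := (by positivity : 0 ≤ 6 * √t).trans hX
  have hflux : t * A ^ 2 ≤ √t * (m / 128) := by
    calc t * A ^ 2 = √t * (√t * A ^ 2) := by rw [← mul_assoc, hsq]
      _ ≤ √t * (m / 128) := by gcongr; linarith
  have hpotential : t * L * A ^ 2 ≤ m / 128 := by
    calc t * L * A ^ 2 = L * √t * (√t * A ^ 2) := by linear_combination -(L * A ^ 2) * hsq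
      _ ≤ 1 * (√t * A ^ 2) := by gcongr
      _ ≤ m / 128 := by linarith
  have habsorbed : 5 * (√t * m) ≤ 2 * π / t * I := by
    linarith [mul_le_mul_of_nonneg_left hpotential hX0, mul_le_mul_of_nonneg_right hX hm,
      mul_nonneg (sqrt_nonneg t) hm]
  rw [div_mul_eq_mul_div, le_div_iff₀ ht] at habsorbed
  refine le_of_mul_le_mul_left ?_ two_pi_pos
  linarith [mul_le_mul_of_nonneg_right (pi_lt_d2.le.trans (by norm_num : (3.15 : ℝ) ≤ 5))
    (by positivity : 0 ≤ t * √t * m)]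

theorem integral_norm_sq_le_exp_mul_integral_tubeMass (h : IsSchrodingerSolution u V L A)
    (ht : 0 < t) (hA : 128 * √t * A ^ 2 ≤ ∫ y in 𝕋, ‖u y 0‖ ^ 2) (hsmall : 128 * √t ≤ 1)
    (hL : L * √t ≤ 1) :
    ∫ y in 𝕋, ‖u y 0‖ ^ 2 ≤ exp (1 / t) / t * ∫ s in Icc (t / 4) (3 * t), tubeMass u t s := by
  have hexp : 1 ≤ exp (1 / t) * (√t / 2) := by
    calc (1 : ℝ) = 1 / t * t := by field_simp
      _ ≤ exp (1 / t) * (√t / 2) := by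
        gcongr
        · linarith [add_one_le_exp (1 / t)]
        · nlinarith [sqrt_nonneg t, mul_self_sqrt ht.le]
  calc ∫ y in 𝕋, ‖u y 0‖ ^ 2 ≤ exp (1 / t) * (√t / 2) * ∫ y in 𝕋, ‖u y 0‖ ^ 2 :=
        le_mul_of_one_le_left (by positivity) hexp
    _ = exp (1 / t) / t * (t * √t * (∫ y in 𝕋, ‖u y 0‖ ^ 2) / 2) := by field_simp
    _ ≤ _ := by
        gcongr
        exact h.mul_integral_norm_sq_le_integral_tubeMass ht hA hsmall hL

theorem integral_norm_sq_zero_le (h : IsSchrodingerSolution u V L A) :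
    ∫ y in 𝕋, ‖u y 0‖ ^ 2 ≤ A ^ 2 := by
  have h0 : (0 : ℝ) ∈ Icc (0 : ℝ) 1 := left_mem_Icc.2 zero_le_one
  have hu := h.continuous_space h0
  have hu' := h.continuous_deriv_space h0
  refine (setIntegral_mono ?_ ?_ fun y => ?_).trans (h.integral_le 0 h0)
  · exact Continuous.integrableOn_Icc (by fun_prop)
  · exact Continuous.integrableOn_Icc (by fun_prop)
  · exact le_add_of_nonneg_right (by positivity)

end IsSchrodingerSolution

theorem bddAbove_of_sSup_ne_zero {S : Set ℝ} (h : sSup S ≠ 0) : BddAbove S :=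
  not_imp_comm.1 Real.sSup_of_not_bddAbove h

theorem mul_sqrt_mul_sq_le_of_lt_div_pow_four {A c t : ℝ} (hA : A ≠ 0)
    (h : t < (2 : ℝ) ^ (-14 : ℤ) * (c / A) ^ 4) : 128 * √t * A ^ 2 ≤ c ^ 2 := by
  have hsquare : (2 : ℝ) ^ (-14 : ℤ) * (c / A) ^ 4 = (c ^ 2 / (128 * A ^ 2)) ^ 2 := by
    rw [zpow_neg]
    field_simp
    ring
  rw [hsquare] at h
  have hsqrt : √t ≤ c ^ 2 / (128 * A ^ 2) := sqrt_le_iff.2 ⟨by positivity, h.le⟩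
  rw [le_div_iff₀ (by positivity)] at hsqrt
  linarith

theorem mul_sqrt_le_one_of_lt_one_div_sq {L t : ℝ} (ht : 0 ≤ t) (h : t < 1 / L ^ 2) :
    L * √t ≤ 1 := by
  have hL : 0 < L ^ 2 := one_div_pos.1 (ht.trans_lt h)
  rw [lt_div_iff₀ hL] at h
  refine (le_abs_self _).trans ((sq_le_one_iff_abs_le_one _).1 ?_)
  rw [mul_pow, sq_sqrt ht]
  linarith

/-- The periodic observability inequality (Remark 2 of the paper): there is a universal
constant `c₁ > 0` such that every `2π`-periodic-in-space regular solution of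
`∂ₜu = i(∂ₓₓu + Vu)` with `|V| ≤ L`, initial mass `c₀²` on `[0,2π]` and
`H¹`-bound `A`, satisfies, for every `0 < t < t* = min(256A/(c₀L), 2⁻¹⁴(c₀/A)⁴, 4π², 1/L²)`,
`(e^{c₁/t}/t) ∫_{t/4}^{3t} ∫_{{y∈[0,2π] : dist(y±2πs/t, 2πℤ)<8π√t}} (|u|²+s|∂_yu|²) dy ds ≥ c₀²`. -/
theorem periodic_one_time_lower_bound :
    ∃ c₁ : ℝ, 0 < c₁ ∧
      ∀ (u V : ℝ → ℝ → ℂ) (L c₀ A : ℝ),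
        (∀ t ∈ Icc (0:ℝ) 1, ContDiff ℝ 2 (fun x => u x t)) →
        (∀ x : ℝ, ContDiff ℝ 1 (fun t => u x t)) →
        (∀ x t : ℝ, u (x + 2*π) t = u x t) →
        (∀ x t : ℝ, V (x + 2*π) t = V x t) →
        (∀ x : ℝ, ∀ t ∈ Icc (0:ℝ) 1,
          deriv (fun τ => u x τ) t
            = Complex.I *
                (deriv (fun y => deriv (fun z => u z t) y) x + V x t * u x t)) →
        (∀ x t : ℝ, ‖V x t‖ ≤ L) →
        0 < c₀ → 0 ≤ A →
        (∫ x in Icc (0:ℝ) (2*π), ‖u x 0‖ ^ 2) = c₀ ^ 2 →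
        sSup ((fun t => ∫ x in Icc (0:ℝ) (2*π),
            (‖u x t‖ ^ 2 + ‖deriv (fun y => u y t) x‖ ^ 2)) '' Icc (0:ℝ) 1) = A ^ 2 →
        ∀ t : ℝ, 0 < t →
          t < min (min (256 * A / (c₀ * L)) ((2:ℝ) ^ (-14 : ℤ) * (c₀ / A) ^ 4))
              (min (4 * π ^ 2) (1 / L ^ 2)) →
          c₀ ^ 2 ≤ Real.exp (c₁ / t) / t *
            ∫ s in Icc (t/4) (3*t),
              ∫ y in {y : ℝ | y ∈ Icc (0:ℝ) (2*π) ∧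
                  ((∃ k : ℤ, |y + 2*π*(s/t) - 2*π*(k:ℝ)| < 8*π*Real.sqrt t) ∨
                   (∃ k : ℤ, |y - 2*π*(s/t) - 2*π*(k:ℝ)| < 8*π*Real.sqrt t))},
                (‖u y s‖ ^ 2 + s * ‖deriv (fun z => u z s) y‖ ^ 2) := by
  refine ⟨1, one_pos, fun u V L c₀ A hspace htime hu _ heq hV _ _ hc hsup t ht htlt => ?_⟩
  simp only [lt_min_iff] at htlt
  obtain ⟨⟨htA, htc⟩, -, htL⟩ := htlt
  have hA : A ≠ 0 := by
    rintro rfl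
    simp only [mul_zero, zero_div] at htA
    exact ht.not_gt htA
  have hbdd := bddAbove_of_sSup_ne_zero (hsup.trans_ne (pow_ne_zero 2 hA))
  have h : IsSchrodingerSolution u V L A := ⟨hspace, htime, fun s x => hu x s, heq, hV,
    fun s hs => (le_csSup hbdd (mem_image_of_mem _ hs)).trans_eq hsup⟩
  have hsqrtA := mul_sqrt_mul_sq_le_of_lt_div_pow_four hA htc
  have hsqrt : 128 * √t ≤ 1 := by
    refine le_of_mul_le_mul_right ?_ (by positivity : 0 < A ^ 2)
    rw [one_mul]
    exact hsqrtA.trans (hc.symm.trans_le h.integral_norm_sq_zero_le)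
  rw [← hc] at hsqrtA ⊢
  exact h.integral_norm_sq_le_exp_mul_integral_tubeMass ht hsqrtA hsqrt
    (mul_sqrt_le_one_of_lt_one_div_sq ht.le htL)
end
end

section
/- (Carleman estimate.) Let R > 0 and let φ : [0,1] → ℝ be a smooth function. Then there exists a constant c_n > 0, depending only on the dimension n and on ‖φ'‖_∞ + ‖φ''‖_∞, such that for every σ ≥ c_n R² and every g ∈ C₀^∞(ℝⁿ × ℝ) (smooth and compactly supported in ℝⁿ × (0,1)) whose support is contained in the set {(x,t) : |x/R + φ(t)e₁| ≥ 1}, one has (σ^{3/2}/(c_n R²)) · ‖ e^{σ|x/R + φ(t)e₁|²} g ‖_{L²(ℝⁿ×ℝ)} ≤ ‖ e^{σ|x/R + φ(t)e₁|²} (i∂ₜ + Δ) g ‖_{L²(ℝⁿ×ℝ)}. -/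
open MeasureTheory Real Set

noncomputable section

/-- `ℝⁿ` as a Euclidean space. -/
abbrev Euc (n : ℕ) := EuclideanSpace ℝ (Fin n)

/-- The spatial Laplacian `Δf = ∑ⱼ ∂²f/∂xⱼ²`. -/
def lapl {n : ℕ} (f : Euc n → ℂ) (x : Euc n) : ℂ :=
  ∑ i : Fin n,
    fderiv ℝ (fun y => fderiv ℝ f y (EuclideanSpace.single i (1 : ℝ))) x
      (EuclideanSpace.single i (1 : ℝ))

/-!
Put `f = e^Φ g`. Conjugation gives `e^Φ (i∂ₜ + Δ) g = S f + A f` with `S = i∂ₜ + Δ + |∇Φ|²`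
symmetric and `A = -(2∇Φ·∇ + ΔΦ + i∂ₜΦ)` antisymmetric, so that
`‖e^Φ (i∂ₜ + Δ) g‖² ≥ ∫ 2⟨S f, A f⟩`. Modulo divergences, `2⟨S f, A f⟩` is the density
`4 D²Φ(∇f, ∇f) + 4⟨if, ∇∂ₜΦ·∇f⟩ + (4 D²Φ(∇Φ, ∇Φ) - Δ²Φ + ∂ₜ²Φ)|f|²` of the commutator form.

For `Φ(x, t) = σ|y|²` with `y = rx + γ(t)` and any smooth curve `γ` this density equals
`2σ|2r∇f + i f γ'|² + (32σ³r⁴|y|² + 2σ⟨y, γ''⟩)|f|²`: the velocity `γ'` disappears into a square,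
and only `γ''` has to be absorbed into the cubic term. This is possible where `|y| ≥ 1` as soon as
`σr²` dominates `max(1, |γ''|)`.
-/

open scoped ContDiff

/-! ### Directional derivatives -/

/-- The derivative of `F` in the fixed direction `v`, as a function of the base point, so that it
can be iterated. -/
def dirDeriv {V W : Type*} [NormedAddCommGroup V] [NormedSpace ℝ V] [NormedAddCommGroup W]
    [NormedSpace ℝ W] (v : V) (F : V → W) (p : V) : W := fderiv ℝ F p v

local notation "∂[" v "]" => dirDeriv v

section DirDeriv

variable {V W : Type*} [NormedAddCommGroup V] [NormedSpace ℝ V] [NormedAddCommGroup W]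
  [NormedSpace ℝ W]

variable {F G : V → W} {a Φ : V → ℝ}

lemma contDiff_dirDeriv (hF : ContDiff ℝ ∞ F) (v : V) : ContDiff ℝ ∞ (∂[v] F) :=
  (hF.fderiv_right (m := ∞) (by simp)).clm_apply contDiff_const

lemma differentiable_of_smooth (hF : ContDiff ℝ ∞ F) : Differentiable ℝ F :=
  hF.differentiable (by simp)

lemma tsupport_dirDeriv_subset (v : V) (F : V → W) : tsupport (∂[v] F) ⊆ tsupport F :=
  tsupport_fderiv_apply_subset ℝ v

lemma hasCompactSupport_dirDeriv (hF : HasCompactSupport F) (v : V) :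
    HasCompactSupport (∂[v] F) := hF.fderiv_apply (𝕜 := ℝ) v

lemma dirDeriv_comm (hF : ContDiff ℝ ∞ F) (v w : V) : ∂[v] (∂[w] F) = ∂[w] (∂[v] F) := by
  have hF' : Differentiable ℝ (fderiv ℝ F) :=
    differentiable_of_smooth (hF.fderiv_right (m := ∞) (by simp))
  have second (u u' p : V) : ∂[u] (∂[u'] F) p = fderiv ℝ (fderiv ℝ F) p u u' := by
    change fderiv ℝ (fun q => fderiv ℝ F q u') p u = _
    simp [fderiv_clm_apply (hF' p) (differentiableAt_const u')]
  ext p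
  rw [second, second]
  exact (hF.contDiffAt.isSymmSndFDerivAt
    (by simpa using WithTop.coe_le_coe.2 (le_top : (2 : ℕ∞) ≤ ⊤))).eq v w

lemma dirDeriv_sub (hF : ContDiff ℝ ∞ F) (hG : ContDiff ℝ ∞ G) (v p : V) :
    ∂[v] (fun q => F q - G q) p = ∂[v] F p - ∂[v] G p := by
  simp [dirDeriv, fderiv_fun_sub (differentiable_of_smooth hF p) (differentiable_of_smooth hG p)]

lemma dirDeriv_smul (ha : ContDiff ℝ ∞ a) (hF : ContDiff ℝ ∞ F) (v p : V) :
    ∂[v] (fun q => a q • F q) p = a p • ∂[v] F p + ∂[v] a p • F p := by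
  simp [dirDeriv, fderiv_fun_smul (differentiable_of_smooth ha p) (differentiable_of_smooth hF p)]

lemma dirDeriv_exp (hΦ : ContDiff ℝ ∞ Φ) (v p : V) :
    ∂[v] (fun q => exp (Φ q)) p = exp (Φ p) * ∂[v] Φ p := by
  simp [dirDeriv, fderiv_exp (differentiable_of_smooth hΦ p)]

lemma dirDeriv_const_mul (hF : ContDiff ℝ ∞ Φ) (c : ℝ) (v p : V) :
    ∂[v] (fun q => c * Φ q) p = c * ∂[v] Φ p := by
  simp [dirDeriv, fderiv_const_mul (differentiable_of_smooth hF p)]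

lemma dirDeriv_I_mul {f : V → ℂ} (hf : ContDiff ℝ ∞ f) (v p : V) :
    ∂[v] (fun q => Complex.I * f q) p = Complex.I * ∂[v] f p := by
  simp [dirDeriv, fderiv_const_mul (differentiable_of_smooth hf p)]

lemma dirDeriv_inner {H : Type*} [NormedAddCommGroup H] [InnerProductSpace ℝ H] {F G : V → H}
    (hF : ContDiff ℝ ∞ F) (hG : ContDiff ℝ ∞ G) (v p : V) :
    ∂[v] (fun q => inner ℝ (F q) (G q)) p
      = inner ℝ (F p) (∂[v] G p) + inner ℝ (∂[v] F p) (G p) :=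
  fderiv_inner_apply ℝ (differentiable_of_smooth hF p) (differentiable_of_smooth hG p) v

lemma dirDeriv_sum_sq {ι : Type*} [Fintype ι] {a : ι → V → ℝ} (ha : ∀ j, ContDiff ℝ ∞ (a j))
    (v p : V) : ∂[v] (fun q => ∑ j, a j q ^ 2) p = ∑ j, 2 * a j p * ∂[v] (a j) p := by
  have ha' (j : ι) : DifferentiableAt ℝ (a j) p := differentiable_of_smooth (ha j) p
  simp [dirDeriv, fderiv_fun_sum fun j _ => (ha' j).fun_pow 2, fderiv_fun_pow 2 (ha' _)]

lemma dirDeriv_zero_one {F : V × ℝ → W} (hF : Differentiable ℝ F) (p : V × ℝ) :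
    ∂[(0, 1)] F p = deriv (fun t => F (p.1, t)) p.2 := by
  have hslice : HasFDerivAt (fun t => F (p.1, t)) _ p.2 :=
    (hF p).hasFDerivAt.comp p.2 (hasFDerivAt_prodMk_right p.1 p.2)
  simp [dirDeriv, hslice.hasDerivAt.deriv]

lemma dirDeriv_mk_zero {V' : Type*} [NormedAddCommGroup V'] [NormedSpace ℝ V'] {F : V × V' → W}
    (hF : Differentiable ℝ F) (v : V) (p : V × V') :
    ∂[(v, 0)] F p = fderiv ℝ (fun x => F (x, p.2)) p.1 v := by
  have hslice : HasFDerivAt (fun x => F (x, p.2)) _ p.1 :=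
    (hF p).hasFDerivAt.comp p.1 (hasFDerivAt_prodMk_left p.1 p.2)
  simp [dirDeriv, hslice.fderiv]

lemma dirDeriv_comp_snd {η : ℝ → W} (hη : Differentiable ℝ η) (v p : V × ℝ) :
    ∂[v] (fun q => η q.2) p = v.2 • deriv η p.2 := by
  have hη' : HasFDerivAt (fun q : V × ℝ => η q.2) _ p :=
    (hη p.2).hasDerivAt.hasFDerivAt.comp p hasFDerivAt_snd
  simp [dirDeriv, hη'.fderiv]

end DirDeriv

/-! ### Integration by parts -/

section NullIntegrands

variable {V H : Type*} [NormedAddCommGroup V] [NormedSpace ℝ V] [MeasurableSpace V] [BorelSpace V]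
  [NormedAddCommGroup H] [InnerProductSpace ℝ H]

/-- The space of integrable functions with vanishing integral. It contains all divergences of
compactly supported fields, so two integrands that differ by integrations by parts agree modulo
this space. -/
def nullIntegrands {X : Type*} [MeasurableSpace X] (μ : Measure X) : Submodule ℝ (X → ℝ) where
  carrier := {h | Integrable h μ ∧ ∫ p, h p ∂μ = 0}
  zero_mem' := ⟨integrable_zero _ _ _, integral_zero _ _⟩
  add_mem' hF hG := ⟨hF.1.add hG.1, by rw [integral_add' hF.1 hG.1, hF.2, hG.2, add_zero]⟩
  smul_mem' c _ hF := ⟨hF.1.smul c, by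
    simp only [Pi.smul_apply, integral_smul, hF.2, smul_zero]⟩

variable [FiniteDimensional ℝ V] {μ : Measure V} [μ.IsAddHaarMeasure]

lemma dirDeriv_mem_nullIntegrands {h : V → ℝ} (hh : ContDiff ℝ ∞ h) (hc : HasCompactSupport h)
    (v : V) : ∂[v] h ∈ nullIntegrands μ := by
  have hint : Integrable (∂[v] h) μ :=
    (contDiff_dirDeriv hh v).continuous.integrable_of_hasCompactSupport
      (hasCompactSupport_dirDeriv hc v)
  have hint' : Integrable (fun p => fderiv ℝ h p v) μ := hint
  have parts := integral_mul_fderiv_eq_neg_fderiv_mul_of_integrable (μ := μ)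
    (f := fun _ => (1 : ℝ)) (g := h) (v := v) (by simp) (by simpa using hint')
    (by simpa using hh.continuous.integrable_of_hasCompactSupport hc)
    (fun p _ => differentiableAt_const _) (fun p _ => differentiable_of_smooth hh p)
  exact ⟨hint, by simpa [dirDeriv] using parts⟩

lemma dirDeriv_mul_inner_mem_nullIntegrands {a : V → ℝ} {F G : V → H} (ha : ContDiff ℝ ∞ a)
    (hF : ContDiff ℝ ∞ F) (hc : HasCompactSupport F) (hG : ContDiff ℝ ∞ G) (v : V) :
    (fun p => a p * (inner ℝ (F p) (∂[v] G p) + inner ℝ (∂[v] F p) (G p))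
      + ∂[v] a p * inner ℝ (F p) (G p)) ∈ nullIntegrands μ := by
  have hFG : ContDiff ℝ ∞ (fun p => inner ℝ (F p) (G p)) := hF.inner ℝ hG
  have hsupp : HasCompactSupport (fun p => a p • inner ℝ (F p) (G p)) :=
    hc.mono fun p hp hFp => hp (by simp [hFp])
  convert dirDeriv_mem_nullIntegrands (μ := μ) (h := fun p => a p • inner ℝ (F p) (G p))
    (ha.smul hFG) hsupp v using 1
  ext p
  rw [dirDeriv_smul ha hFG, dirDeriv_inner hF hG, smul_eq_mul, smul_eq_mul]

end NullIntegrands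

section Multipliers

variable {V H : Type*} [NormedAddCommGroup V] [NormedSpace ℝ V] [FiniteDimensional ℝ V]
  [MeasurableSpace V] [BorelSpace V] {μ : Measure V} [μ.IsAddHaarMeasure]
  [NormedAddCommGroup H] [InnerProductSpace ℝ H] {a : V → ℝ}

lemma real_inner_I_mul_left (z w : ℂ) :
    inner ℝ (Complex.I * z) w = -inner ℝ z (Complex.I * w) := by
  simp [Complex.inner]; ring

lemma real_inner_self_I_mul (z : ℂ) : inner ℝ z (Complex.I * z) = 0 := by
  simp [Complex.inner]; ring

lemma mass_flux_mem_nullIntegrands {f : V → H} (ha : ContDiff ℝ ∞ a) (hf : ContDiff ℝ ∞ f)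
    (hc : HasCompactSupport f) (v : V) :
    (fun p => 2 * a p * inner ℝ (f p) (∂[v] f p) + ∂[v] a p * ‖f p‖ ^ 2)
      ∈ nullIntegrands μ := by
  convert dirDeriv_mul_inner_mem_nullIntegrands (μ := μ) ha hf hc hf v using 1
  ext p
  rw [real_inner_self_eq_norm_sq, real_inner_comm (f p) (∂[v] f p)]
  ring

-- With `b = ∂ᵥa`: `∂ᵤ(4a⟨∂ᵤf, ∂ᵥf⟩) - ∂ᵥ(2a|∂ᵤf|²) + ∂ᵤ(2b⟨∂ᵤf, f⟩) - ∂ᵤ(∂ᵤb|f|²)`.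
lemma hessian_flux_mem_nullIntegrands {f : V → H} (ha : ContDiff ℝ ∞ a) (hf : ContDiff ℝ ∞ f)
    (hc : HasCompactSupport f) (u v : V) :
    (fun p => 4 * a p * inner ℝ (∂[u] (∂[u] f) p) (∂[v] f p)
        + 2 * ∂[v] a p * inner ℝ (∂[u] (∂[u] f) p) (f p)
        + 4 * ∂[u] a p * inner ℝ (∂[u] f p) (∂[v] f p)
        - ∂[u] (∂[u] (∂[v] a)) p * ‖f p‖ ^ 2) ∈ nullIntegrands μ := by
  have hfu := contDiff_dirDeriv hf u
  have hcu := hasCompactSupport_dirDeriv hc u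
  have hb := contDiff_dirDeriv ha v
  have stress := dirDeriv_mul_inner_mem_nullIntegrands (μ := μ) ha hfu hcu
    (contDiff_dirDeriv hf v) u
  have energy := mass_flux_mem_nullIntegrands (μ := μ) ha hfu hcu v
  have current := dirDeriv_mul_inner_mem_nullIntegrands (μ := μ) hb hfu hcu hf u
  have mass := mass_flux_mem_nullIntegrands (μ := μ) (contDiff_dirDeriv hb u) hf hc u
  convert add_mem (sub_mem (add_mem (Submodule.smul_mem _ 4 stress)
    (Submodule.smul_mem _ (-2) energy)) mass) (Submodule.smul_mem _ 2 current) using 1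
  ext p
  simp only [Pi.add_apply, Pi.sub_apply, Pi.smul_apply, smul_eq_mul, dirDeriv_comm hf u v,
    real_inner_self_eq_norm_sq, real_inner_comm (∂[u] f p) (f p)]
  ring

-- `∂ᵤ(2a⟨∂ᵤf, if⟩)`, where `⟨∂ᵤf, i∂ᵤf⟩ = 0`.
lemma current_flux_mem_nullIntegrands {f : V → ℂ} (ha : ContDiff ℝ ∞ a) (hf : ContDiff ℝ ∞ f)
    (hc : HasCompactSupport f) (u : V) :
    (fun p => 2 * a p * inner ℝ (∂[u] (∂[u] f) p) (Complex.I * f p)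
        + 2 * ∂[u] a p * inner ℝ (Complex.I * f p) (∂[u] f p)) ∈ nullIntegrands μ := by
  have current := dirDeriv_mul_inner_mem_nullIntegrands (μ := μ) ha (contDiff_dirDeriv hf u)
    (hasCompactSupport_dirDeriv hc u) (G := fun p => Complex.I * f p) (contDiff_const.mul hf) u
  convert Submodule.smul_mem _ 2 current using 1
  ext p
  simp only [Pi.smul_apply, smul_eq_mul, dirDeriv_I_mul hf, real_inner_self_I_mul,
    real_inner_comm (Complex.I * f p) (∂[u] f p)]
  ring

-- `∂_τ(2a⟨if, ∂ᵥf⟩) - ∂ᵥ(2a⟨if, ∂_τf⟩)`, in which the second derivatives of `f` cancel.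
lemma momentum_flux_mem_nullIntegrands {f : V → ℂ} (ha : ContDiff ℝ ∞ a) (hf : ContDiff ℝ ∞ f)
    (hc : HasCompactSupport f) (τ v : V) :
    (fun p => 4 * a p * inner ℝ (Complex.I * ∂[τ] f p) (∂[v] f p)
        + 2 * ∂[v] a p * inner ℝ (Complex.I * ∂[τ] f p) (f p)
        + 2 * ∂[τ] a p * inner ℝ (Complex.I * f p) (∂[v] f p)) ∈ nullIntegrands μ := by
  have hIf : ContDiff ℝ ∞ (fun p => Complex.I * f p) := contDiff_const.mul hf
  have hIc : HasCompactSupport (fun p => Complex.I * f p) := hc.mul_left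
  have hτ := dirDeriv_mul_inner_mem_nullIntegrands (μ := μ) ha hIf hIc (contDiff_dirDeriv hf v) τ
  have hv := dirDeriv_mul_inner_mem_nullIntegrands (μ := μ) ha hIf hIc (contDiff_dirDeriv hf τ) v
  convert sub_mem (Submodule.smul_mem _ 2 hτ) (Submodule.smul_mem _ 2 hv) using 1
  ext p
  have skew (z w : ℂ) : inner ℝ (Complex.I * z) w = -inner ℝ (Complex.I * w) z := by
    rw [real_inner_I_mul_left, real_inner_comm]
  simp only [Pi.sub_apply, Pi.smul_apply, smul_eq_mul, dirDeriv_I_mul hf, dirDeriv_comm hf τ v,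
    skew (∂[v] f p), skew (f p) (∂[τ] f p)]
  ring

end Multipliers

/-! ### Conjugation of the Schrödinger operator -/

section Conjugation

/-- The product `e^Φ g` of a function with an exponential weight. -/
def expWeight {X : Type*} (Φ : X → ℝ) (g : X → ℂ) (p : X) : ℂ := exp (Φ p) • g p

lemma norm_expWeight {X : Type*} (Φ : X → ℝ) (g : X → ℂ) (p : X) :
    ‖expWeight Φ g p‖ = exp (Φ p) * ‖g p‖ := by
  rw [expWeight, norm_smul, norm_of_nonneg (exp_pos _).le]

lemma hasCompactSupport_expWeight {X : Type*} [TopologicalSpace X] {g : X → ℂ} (Φ : X → ℝ)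
    (hc : HasCompactSupport g) : HasCompactSupport (expWeight Φ g) :=
  hc.mono fun p hp hgp => hp (by simp [expWeight, hgp])

lemma integrable_norm_expWeight_sq {X : Type*} [TopologicalSpace X] [MeasurableSpace X]
    [OpensMeasurableSpace X] {μ : Measure X} [IsFiniteMeasureOnCompacts μ] {Φ : X → ℝ}
    {g : X → ℂ} (hΦ : Continuous Φ) (hg : Continuous g) (hc : HasCompactSupport g) :
    Integrable (fun p => ‖expWeight Φ g p‖ ^ 2) μ := by
  have hcont : Continuous (expWeight Φ g) := hΦ.rexp.smul hg
  exact (hcont.norm.pow 2).integrable_of_hasCompactSupport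
    ((hasCompactSupport_expWeight Φ hc).norm.comp_left (zero_pow two_ne_zero))

variable {V ι : Type*} [NormedAddCommGroup V] [NormedSpace ℝ V] [Fintype ι]

/-- The Schrödinger operator `i∂_τ + ∑ⱼ ∂²_{eⱼ}` with time direction `τ` and spatial directions
`eⱼ`. -/
def schrodingerOp (τ : V) (e : ι → V) (g : V → ℂ) (p : V) : ℂ :=
  Complex.I * ∂[τ] g p + ∑ j, ∂[e j] (∂[e j] g) p

/-- The symmetric part `i∂_τ + Δ + |∇Φ|²` of `e^Φ (i∂_τ + Δ) e^{-Φ}`. -/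
def symmPart (τ : V) (e : ι → V) (Φ : V → ℝ) (f : V → ℂ) (p : V) : ℂ :=
  Complex.I * ∂[τ] f p + ∑ j, ∂[e j] (∂[e j] f) p + (∑ j, ∂[e j] Φ p ^ 2) • f p

/-- The antisymmetric part `-(2∇Φ·∇ + ΔΦ + i∂_τΦ)` of `e^Φ (i∂_τ + Δ) e^{-Φ}`. -/
def skewPart (τ : V) (e : ι → V) (Φ : V → ℝ) (f : V → ℂ) (p : V) : ℂ :=
  -((2 : ℝ) • ∑ j, ∂[e j] Φ p • ∂[e j] f p + (∑ j, ∂[e j] (∂[e j] Φ) p) • f p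
    + ∂[τ] Φ p • (Complex.I * f p))

/-- The density of the quadratic form of the commutator of the symmetric and antisymmetric parts:
`4 D²Φ(∇f, ∇f) + 4⟨if, ∇∂_τΦ·∇f⟩ + (4 D²Φ(∇Φ, ∇Φ) - Δ²Φ + ∂_τ²Φ)|f|²`. -/
def commutatorDensity (τ : V) (e : ι → V) (Φ : V → ℝ) (f : V → ℂ) (p : V) : ℝ :=
  4 * ∑ j, ∑ k, ∂[e j] (∂[e k] Φ) p * inner ℝ (∂[e j] f p) (∂[e k] f p)
    + 4 * ∑ k, ∂[τ] (∂[e k] Φ) p * inner ℝ (Complex.I * f p) (∂[e k] f p)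
    + (4 * ∑ j, ∑ k, ∂[e j] (∂[e k] Φ) p * ∂[e j] Φ p * ∂[e k] Φ p
      - ∑ j, ∑ k, ∂[e j] (∂[e j] (∂[e k] (∂[e k] Φ))) p + ∂[τ] (∂[τ] Φ) p) * ‖f p‖ ^ 2

variable {g f : V → ℂ} {Φ : V → ℝ}

lemma contDiff_expWeight (hΦ : ContDiff ℝ ∞ Φ) (hg : ContDiff ℝ ∞ g) :
    ContDiff ℝ ∞ (expWeight Φ g) := hΦ.exp.smul hg

lemma contDiff_schrodingerOp (hg : ContDiff ℝ ∞ g) (τ : V) (e : ι → V) :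
    ContDiff ℝ ∞ (schrodingerOp τ e g) :=
  (contDiff_const.mul (contDiff_dirDeriv hg τ)).add
    (ContDiff.sum fun j _ => contDiff_dirDeriv (contDiff_dirDeriv hg (e j)) (e j))

lemma hasCompactSupport_schrodingerOp (hc : HasCompactSupport g) (τ : V) (e : ι → V) :
    HasCompactSupport (schrodingerOp τ e g) := by
  refine hc.of_isClosed_subset (isClosed_tsupport _) (closure_minimal ?_ (isClosed_tsupport _))
  refine Function.support_subset_iff'.2 fun p hp => ?_
  have hp' {F : V → ℂ} (hF : p ∉ tsupport F) (v : V) : p ∉ tsupport (∂[v] F) :=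
    fun h => hF (tsupport_dirDeriv_subset v F h)
  have first : ∂[τ] g p = 0 := image_eq_zero_of_notMem_tsupport (hp' hp τ)
  have second (j : ι) : ∂[e j] (∂[e j] g) p = 0 :=
    image_eq_zero_of_notMem_tsupport (hp' (hp' hp (e j)) (e j))
  simp [schrodingerOp, first, second]

lemma expWeight_dirDeriv (hΦ : ContDiff ℝ ∞ Φ) (hg : ContDiff ℝ ∞ g) (v : V) :
    expWeight Φ (∂[v] g) = fun p => ∂[v] (expWeight Φ g) p - ∂[v] Φ p • expWeight Φ g p := by
  ext p
  unfold expWeight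
  rw [dirDeriv_smul hΦ.exp hg, dirDeriv_exp hΦ, mul_comm, mul_smul, add_sub_cancel_right]

lemma expWeight_dirDeriv_dirDeriv (hΦ : ContDiff ℝ ∞ Φ) (hg : ContDiff ℝ ∞ g) (v p : V) :
    expWeight Φ (∂[v] (∂[v] g)) p =
      ∂[v] (∂[v] (expWeight Φ g)) p + ∂[v] Φ p ^ 2 • expWeight Φ g p
        - ((2 : ℝ) • ∂[v] Φ p • ∂[v] (expWeight Φ g) p
          + ∂[v] (∂[v] Φ) p • expWeight Φ g p) := by
  have hf := contDiff_expWeight hΦ hg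
  have hΦv := contDiff_dirDeriv hΦ v
  simp only [expWeight_dirDeriv hΦ (contDiff_dirDeriv hg v), expWeight_dirDeriv hΦ hg]
  rw [dirDeriv_sub (G := fun q => ∂[v] Φ q • expWeight Φ g q) (contDiff_dirDeriv hf v)
      (hΦv.smul hf), dirDeriv_smul hΦv hf]
  module

lemma expWeight_schrodingerOp (hΦ : ContDiff ℝ ∞ Φ) (hg : ContDiff ℝ ∞ g) (τ : V) (e : ι → V)
    (p : V) : expWeight Φ (schrodingerOp τ e g) p
      = symmPart τ e Φ (expWeight Φ g) p + skewPart τ e Φ (expWeight Φ g) p := by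
  have split : expWeight Φ (schrodingerOp τ e g) p = Complex.I * expWeight Φ (∂[τ] g) p
      + ∑ j, expWeight Φ (∂[e j] (∂[e j] g)) p := by
    simp only [expWeight, schrodingerOp, smul_add, Finset.smul_sum, mul_smul_comm]
  simp only [split, expWeight_dirDeriv hΦ hg τ, expWeight_dirDeriv_dirDeriv hΦ hg,
    Finset.sum_sub_distrib, Finset.sum_add_distrib, ← Finset.smul_sum, ← Finset.sum_smul,
    symmPart, skewPart, mul_sub, mul_smul_comm]
  module

lemma two_mul_inner_symmPart_skewPart (τ : V) (e : ι → V) (Φ : V → ℝ) (f : V → ℂ) (p : V) :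
    2 * inner ℝ (symmPart τ e Φ f p) (skewPart τ e Φ f p) =
      -((∑ j, ∑ k, (4 * ∂[e k] Φ p * inner ℝ (∂[e j] (∂[e j] f) p) (∂[e k] f p)
          + 2 * ∂[e k] (∂[e k] Φ) p * inner ℝ (∂[e j] (∂[e j] f) p) (f p)))
        + ∑ j, 2 * ∂[τ] Φ p * inner ℝ (∂[e j] (∂[e j] f) p) (Complex.I * f p)
        + ∑ k, (4 * ∂[e k] Φ p * inner ℝ (Complex.I * ∂[τ] f p) (∂[e k] f p)
          + 2 * ∂[e k] (∂[e k] Φ) p * inner ℝ (Complex.I * ∂[τ] f p) (f p))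
        + 2 * ∂[τ] Φ p * inner ℝ (f p) (∂[τ] f p)
        + ∑ k, (∑ j, ∂[e j] Φ p ^ 2) * (4 * ∂[e k] Φ p * inner ℝ (f p) (∂[e k] f p)
          + 2 * ∂[e k] (∂[e k] Φ) p * ‖f p‖ ^ 2)) := by
  have isometry (z w : ℂ) : inner ℝ (Complex.I * z) (Complex.I * w) = inner ℝ w z := by
    simp [Complex.inner]; ring
  unfold symmPart skewPart
  generalize ∑ j, ∂[e j] Φ p ^ 2 = N
  simp only [inner_neg_right, inner_add_left, inner_add_right, sum_inner, inner_sum,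
    real_inner_smul_left, real_inner_smul_right, isometry, real_inner_self_I_mul,
    real_inner_self_eq_norm_sq, Finset.sum_add_distrib, mul_add, mul_assoc, ← Finset.mul_sum,
    ← Finset.sum_mul, mul_left_comm _ N]
  ring

variable [FiniteDimensional ℝ V] [MeasurableSpace V] [BorelSpace V] {μ : Measure V}
  [μ.IsAddHaarMeasure]

lemma potential_flux_mem_nullIntegrands (hΦ : ContDiff ℝ ∞ Φ) (hf : ContDiff ℝ ∞ f)
    (hc : HasCompactSupport f) (e : ι → V) :
    (fun p => ∑ k, (∑ j, ∂[e j] Φ p ^ 2) * (4 * ∂[e k] Φ p * inner ℝ (f p) (∂[e k] f p)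
          + 2 * ∂[e k] (∂[e k] Φ) p * ‖f p‖ ^ 2)
        + 4 * (∑ j, ∑ k, ∂[e j] (∂[e k] Φ) p * ∂[e j] Φ p * ∂[e k] Φ p) * ‖f p‖ ^ 2)
      ∈ nullIntegrands μ := by
  have hgrad (k : ι) : ContDiff ℝ ∞ (∂[e k] Φ) := contDiff_dirDeriv hΦ (e k)
  have hsq : ContDiff ℝ ∞ (fun p => ∑ j, ∂[e j] Φ p ^ 2) :=
    ContDiff.sum fun j _ => (hgrad j).pow 2
  have hflux (k : ι) := mass_flux_mem_nullIntegrands (μ := μ)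
    (a := fun p => (∑ j, ∂[e j] Φ p ^ 2) • ∂[e k] Φ p) (hsq.smul (hgrad k)) hf hc (e k)
  convert sum_mem fun k (_ : k ∈ Finset.univ) => Submodule.smul_mem _ 2 (hflux k) using 1
  ext p
  simp only [Finset.sum_apply, Pi.smul_apply, dirDeriv_smul hsq (hgrad _), dirDeriv_sum_sq hgrad]
  simp only [smul_eq_mul]
  rw [Finset.mul_sum, Finset.sum_mul, ← Finset.sum_add_distrib]
  refine Finset.sum_congr rfl fun k _ => ?_
  have cross : ∑ j, ∂[e k] (∂[e j] Φ) p * ∂[e k] Φ p * ∂[e j] Φ p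
      = (∑ j, ∂[e j] Φ p * ∂[e k] (∂[e j] Φ) p) * ∂[e k] Φ p := by
    rw [Finset.sum_mul]
    exact Finset.sum_congr rfl fun j _ => by ring
  simp only [mul_assoc (2 : ℝ), ← Finset.mul_sum, cross]
  ring

theorem commutatorDensity_sub_mem_nullIntegrands (hΦ : ContDiff ℝ ∞ Φ) (hf : ContDiff ℝ ∞ f)
    (hc : HasCompactSupport f) (τ : V) (e : ι → V) :
    (fun p => commutatorDensity τ e Φ f p
      - 2 * inner ℝ (symmPart τ e Φ f p) (skewPart τ e Φ f p)) ∈ nullIntegrands μ := by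
  have hτ : ContDiff ℝ ∞ (∂[τ] Φ) := contDiff_dirDeriv hΦ τ
  have hgrad (k : ι) : ContDiff ℝ ∞ (∂[e k] Φ) := contDiff_dirDeriv hΦ (e k)
  have hessian := sum_mem fun j (_ : j ∈ Finset.univ) => sum_mem fun k (_ : k ∈ Finset.univ) =>
    hessian_flux_mem_nullIntegrands (μ := μ) (hgrad k) hf hc (e j) (e k)
  have current := sum_mem fun j (_ : j ∈ Finset.univ) =>
    current_flux_mem_nullIntegrands (μ := μ) hτ hf hc (e j)
  have momentum := sum_mem fun k (_ : k ∈ Finset.univ) =>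
    momentum_flux_mem_nullIntegrands (μ := μ) (hgrad k) hf hc τ (e k)
  have mass := mass_flux_mem_nullIntegrands (μ := μ) hτ hf hc τ
  have potential := potential_flux_mem_nullIntegrands (μ := μ) hΦ hf hc e
  convert add_mem (add_mem (add_mem (add_mem hessian current) momentum) mass) potential using 1
  ext p
  rw [two_mul_inner_symmPart_skewPart, commutatorDensity]
  simp only [Pi.add_apply, Finset.sum_apply, Finset.sum_add_distrib, Finset.sum_sub_distrib,
    dirDeriv_comm hΦ τ, mul_assoc, ← Finset.mul_sum, ← Finset.sum_mul]
  ring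

theorem integral_le_of_le_commutatorDensity (hΦ : ContDiff ℝ ∞ Φ) (hg : ContDiff ℝ ∞ g)
    (hc : HasCompactSupport g) (τ : V) (e : ι → V) {h : V → ℝ} (hh : Integrable h μ)
    (hle : ∀ p, h p ≤ commutatorDensity τ e Φ (expWeight Φ g) p) :
    ∫ p, h p ∂μ ≤ ∫ p, ‖expWeight Φ (schrodingerOp τ e g) p‖ ^ 2 ∂μ := by
  have hint : Integrable (fun p => ‖expWeight Φ (schrodingerOp τ e g) p‖ ^ 2) μ :=
    integrable_norm_expWeight_sq hΦ.continuous (contDiff_schrodingerOp hg τ e).continuous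
      (hasCompactSupport_schrodingerOp hc τ e)
  obtain ⟨hnull, hzero⟩ := commutatorDensity_sub_mem_nullIntegrands (μ := μ) hΦ
    (contDiff_expWeight hΦ hg) (hasCompactSupport_expWeight Φ hc) τ e
  rw [← add_zero (∫ p, ‖_‖ ^ 2 ∂μ), ← hzero, ← integral_add hint hnull]
  refine integral_mono hh (hint.add hnull) fun p => ?_
  dsimp only
  rw [expWeight_schrodingerOp hΦ hg, norm_add_sq_real]
  linarith [hle p, sq_nonneg ‖symmPart τ e Φ (expWeight Φ g) p‖,
    sq_nonneg ‖skewPart τ e Φ (expWeight Φ g) p‖]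

end Conjugation

/-! ### Quadratic phases -/

section QuadraticPhase

variable {E ι : Type*} [NormedAddCommGroup E] [InnerProductSpace ℝ E] [Fintype ι]
  {σ r c : ℝ} {γ : ℝ → E}

/-- The point `rx + γ(t)`: the position `x`, rescaled and seen from a moving centre. -/
def movingPoint (r : ℝ) (γ : ℝ → E) (p : E × ℝ) : E := r • p.1 + γ p.2

/-- The phase `σ|rx + γ(t)|²` of the Carleman weight. -/
def quadraticPhase (σ r : ℝ) (γ : ℝ → E) (p : E × ℝ) : ℝ := σ * ‖movingPoint r γ p‖ ^ 2

lemma contDiff_movingPoint (r : ℝ) (hγ : ContDiff ℝ ∞ γ) : ContDiff ℝ ∞ (movingPoint r γ) :=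
  (contDiff_fst.const_smul r).add (hγ.comp contDiff_snd)

lemma contDiff_quadraticPhase (σ r : ℝ) (hγ : ContDiff ℝ ∞ γ) :
    ContDiff ℝ ∞ (quadraticPhase σ r γ) :=
  contDiff_const.mul ((contDiff_movingPoint r hγ).norm_sq ℝ)

lemma dirDeriv_movingPoint (r : ℝ) (hγ : ContDiff ℝ ∞ γ) (v p : E × ℝ) :
    ∂[v] (movingPoint r γ) p = r • v.1 + v.2 • deriv γ p.2 := by
  have hcurve : DifferentiableAt ℝ (fun q : E × ℝ => γ q.2) p :=
    (differentiable_of_smooth hγ p.2).comp p differentiableAt_snd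
  have hpoint : HasFDerivAt (movingPoint r γ) _ p :=
    (hasFDerivAt_fst.const_smul r).add hcurve.hasFDerivAt
  rw [dirDeriv, hpoint.fderiv, ← dirDeriv_comp_snd (differentiable_of_smooth hγ) v p]
  simp [dirDeriv]

lemma dirDeriv_quadraticPhase (σ r : ℝ) (hγ : ContDiff ℝ ∞ γ) (v : E × ℝ) :
    ∂[v] (quadraticPhase σ r γ) =
      fun p => 2 * σ * inner ℝ (movingPoint r γ p) (r • v.1 + v.2 • deriv γ p.2) := by
  have hy := contDiff_movingPoint r hγ
  ext p
  unfold quadraticPhase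
  simp only [← real_inner_self_eq_norm_sq]
  rw [dirDeriv_const_mul (hy.inner ℝ hy), dirDeriv_inner hy hy, dirDeriv_movingPoint r hγ,
    real_inner_comm (movingPoint r γ p)]
  ring

lemma dirDeriv_dirDeriv_quadraticPhase (σ r : ℝ) (hγ : ContDiff ℝ ∞ γ) (v w p : E × ℝ) :
    ∂[v] (∂[w] (quadraticPhase σ r γ)) p =
      2 * σ * (inner ℝ (r • v.1 + v.2 • deriv γ p.2) (r • w.1 + w.2 • deriv γ p.2)
        + v.2 * w.2 * inner ℝ (movingPoint r γ p) (deriv (deriv γ) p.2)) := by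
  have hγ' : ContDiff ℝ ∞ (deriv γ) := (contDiff_infty_iff_deriv.1 hγ).2
  have hy := contDiff_movingPoint r hγ
  have hcurve : ContDiff ℝ ∞ (fun t => r • w.1 + w.2 • deriv γ t) :=
    contDiff_const.add (hγ'.const_smul w.2)
  have hz : ContDiff ℝ ∞ (fun q : E × ℝ => r • w.1 + w.2 • deriv γ q.2) :=
    hcurve.comp contDiff_snd
  have hz' : ∂[v] (fun q : E × ℝ => r • w.1 + w.2 • deriv γ q.2) p
      = v.2 • w.2 • deriv (deriv γ) p.2 := by
    rw [dirDeriv_comp_snd (differentiable_of_smooth hcurve), deriv_const_add,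
      deriv_fun_const_smul _ (differentiable_of_smooth hγ' p.2)]
  rw [dirDeriv_quadraticPhase σ r hγ, dirDeriv_const_mul (hy.inner ℝ hz), dirDeriv_inner hy hz,
    hz', dirDeriv_movingPoint r hγ, real_inner_smul_right, real_inner_smul_right]
  ring

lemma hessian_quadraticPhase [DecidableEq ι] (b : OrthonormalBasis ι ℝ E) (σ r : ℝ)
    (hγ : ContDiff ℝ ∞ γ) (j k : ι) :
    ∂[(b j, 0)] (∂[(b k, 0)] (quadraticPhase σ r γ)) =
      fun _ => if j = k then 2 * σ * r ^ 2 else 0 := by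
  ext q
  simp only [dirDeriv_dirDeriv_quadraticPhase σ r hγ, zero_smul, add_zero, zero_mul,
    real_inner_smul_left, real_inner_smul_right, b.inner_eq_ite]
  split_ifs <;> ring

lemma bilaplacian_quadraticPhase (b : OrthonormalBasis ι ℝ E) (σ r : ℝ) (hγ : ContDiff ℝ ∞ γ)
    (j k : ι) (p : E × ℝ) :
    ∂[(b j, 0)] (∂[(b j, 0)] (∂[(b k, 0)] (∂[(b k, 0)] (quadraticPhase σ r γ)))) p = 0 := by
  classical
  have hconst (c : ℝ) (v : E × ℝ) : ∂[v] (fun _ => c) = fun _ => 0 := by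
    ext
    simp [dirDeriv]
  rw [hessian_quadraticPhase b σ r hγ, hconst, hconst]

lemma gradient_quadraticPhase (b : OrthonormalBasis ι ℝ E) (σ r : ℝ) (hγ : ContDiff ℝ ∞ γ)
    (k : ι) (p : E × ℝ) :
    ∂[(b k, 0)] (quadraticPhase σ r γ) p = 2 * σ * r * inner ℝ (movingPoint r γ p) (b k) := by
  simp only [dirDeriv_quadraticPhase σ r hγ, real_inner_smul_right, zero_smul, add_zero]
  ring

lemma hessian_gradient_gradient_quadraticPhase (b : OrthonormalBasis ι ℝ E) (σ r : ℝ)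
    (hγ : ContDiff ℝ ∞ γ) (p : E × ℝ) :
    ∑ j, ∑ k, ∂[(b j, 0)] (∂[(b k, 0)] (quadraticPhase σ r γ)) p
        * ∂[(b j, 0)] (quadraticPhase σ r γ) p * ∂[(b k, 0)] (quadraticPhase σ r γ) p
      = 8 * σ ^ 3 * r ^ 4 * ‖movingPoint r γ p‖ ^ 2 := by
  classical
  simp only [hessian_quadraticPhase b σ r hγ, gradient_quadraticPhase b σ r hγ, ite_mul, zero_mul,
    Finset.sum_ite_eq, Finset.mem_univ, if_true]
  rw [← b.sum_sq_inner_left, Finset.mul_sum]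
  exact Finset.sum_congr rfl fun k _ => by ring

lemma norm_smul_add_smul_I_mul_sq (s c : ℝ) (z w : ℂ) :
    ‖s • z + c • (Complex.I * w)‖ ^ 2
      = s ^ 2 * ‖z‖ ^ 2 + 2 * s * (c * inner ℝ (Complex.I * w) z) + c ^ 2 * ‖w‖ ^ 2 := by
  rw [norm_add_sq_real, norm_smul, norm_smul, norm_mul Complex.I, Complex.norm_I, mul_pow, mul_pow,
    norm_eq_abs, norm_eq_abs, sq_abs, sq_abs, real_inner_smul_left, real_inner_smul_right,
    real_inner_comm (Complex.I * w)]
  ring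

-- The terms in `γ'` coming from `⟨if, ∇∂ₜΦ·∇f⟩` and `∂ₜ²Φ|f|²` complete `D²Φ(∇f, ∇f)` to a square.
lemma commutatorDensity_quadraticPhase (b : OrthonormalBasis ι ℝ E) (σ r : ℝ)
    (hγ : ContDiff ℝ ∞ γ) (f : E × ℝ → ℂ) (p : E × ℝ) :
    commutatorDensity (0, 1) (fun j => (b j, 0)) (quadraticPhase σ r γ) f p =
      2 * σ * ∑ k, ‖(2 * r) • ∂[(b k, 0)] f p
          + inner ℝ (deriv γ p.2) (b k) • (Complex.I * f p)‖ ^ 2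
        + (32 * σ ^ 3 * r ^ 4 * ‖movingPoint r γ p‖ ^ 2
          + 2 * σ * inner ℝ (movingPoint r γ p) (deriv (deriv γ) p.2)) * ‖f p‖ ^ 2 := by
  classical
  have mixed (k : ι) : ∂[((0, 1) : E × ℝ)] (∂[(b k, 0)] (quadraticPhase σ r γ)) p
      = 2 * σ * r * inner ℝ (deriv γ p.2) (b k) := by
    simp only [dirDeriv_dirDeriv_quadraticPhase σ r hγ, real_inner_smul_right, smul_zero,
      zero_smul, one_smul, mul_zero, zero_mul, add_zero, zero_add]
    ring
  have acceleration : ∂[((0, 1) : E × ℝ)] (∂[(0, 1)] (quadraticPhase σ r γ)) p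
      = 2 * σ * (∑ k, inner ℝ (deriv γ p.2) (b k) ^ 2
        + inner ℝ (movingPoint r γ p) (deriv (deriv γ) p.2)) := by
    simp [dirDeriv_dirDeriv_quadraticPhase σ r hγ, b.sum_sq_inner_left]
  rw [commutatorDensity, hessian_gradient_gradient_quadraticPhase b σ r hγ, acceleration]
  simp only [bilaplacian_quadraticPhase b σ r hγ, Finset.sum_const_zero]
  simp only [hessian_quadraticPhase b σ r hγ, mixed, ite_mul, zero_mul, Finset.sum_ite_eq,
    Finset.mem_univ, if_true, real_inner_self_eq_norm_sq, norm_smul_add_smul_I_mul_sq,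
    Finset.sum_add_distrib, mul_assoc, ← Finset.mul_sum, ← Finset.sum_mul]
  ring

lemma le_commutatorDensity_quadraticPhase (b : OrthonormalBasis ι ℝ E) (hγ : ContDiff ℝ ∞ γ)
    (hc : 1 ≤ c) (hσ : 0 ≤ σ) (hcσ : c ≤ σ * r ^ 2) {f : E × ℝ → ℂ} {p : E × ℝ}
    (hγ'' : ‖deriv (deriv γ) p.2‖ ≤ c) (hf : f p ≠ 0 → 1 ≤ ‖movingPoint r γ p‖) :
    σ ^ 3 * r ^ 4 * ‖f p‖ ^ 2
      ≤ commutatorDensity (0, 1) (fun j => (b j, 0)) (quadraticPhase σ r γ) f p := by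
  rw [commutatorDensity_quadraticPhase b σ r hγ]
  refine le_add_of_nonneg_of_le (by positivity) ?_
  rcases eq_or_ne (f p) 0 with hzero | hne
  · simp [hzero]
  refine mul_le_mul_of_nonneg_right ?_ (by positivity)
  have hy : 1 ≤ ‖movingPoint r γ p‖ ^ 2 := one_le_pow₀ (hf hne)
  have hcurv : -(c * ‖movingPoint r γ p‖ ^ 2)
      ≤ inner ℝ (movingPoint r γ p) (deriv (deriv γ) p.2) := by
    refine neg_le_of_abs_le ((abs_real_inner_le_norm _ _).trans ?_)
    rw [mul_comm c, sq]
    gcongr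
    exact le_mul_of_one_le_left (norm_nonneg _) (hf hne)
  have hsq : c ≤ (σ * r ^ 2) ^ 2 := by nlinarith
  have absorb : (σ * r ^ 2) ^ 2 ≤ 32 * (σ * r ^ 2) ^ 2 * ‖movingPoint r γ p‖ ^ 2
      + 2 * inner ℝ (movingPoint r γ p) (deriv (deriv γ) p.2) := by
    nlinarith [mul_le_mul_of_nonneg_right hsq (sq_nonneg ‖movingPoint r γ p‖)]
  calc σ ^ 3 * r ^ 4 = σ * (σ * r ^ 2) ^ 2 := by ring
    _ ≤ σ * _ := mul_le_mul_of_nonneg_left absorb hσ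
    _ = _ := by ring

theorem integral_norm_expWeight_quadraticPhase_le [FiniteDimensional ℝ E] [MeasurableSpace E]
    [BorelSpace E] (μ : Measure (E × ℝ)) [μ.IsAddHaarMeasure] (b : OrthonormalBasis ι ℝ E)
    (hγ : ContDiff ℝ ∞ γ) (hc : 1 ≤ c) (hγ'' : ∀ t, ‖deriv (deriv γ) t‖ ≤ c) (hσ : 0 ≤ σ)
    (hcσ : c ≤ σ * r ^ 2) {g : E × ℝ → ℂ} (hg : ContDiff ℝ ∞ g) (hgc : HasCompactSupport g)
    (hsupp : Function.support g ⊆ {p | 1 ≤ ‖movingPoint r γ p‖}) :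
    σ ^ 3 * r ^ 4 * ∫ p, ‖expWeight (quadraticPhase σ r γ) g p‖ ^ 2 ∂μ
      ≤ ∫ p, ‖expWeight (quadraticPhase σ r γ)
          (schrodingerOp (0, 1) (fun j => (b j, 0)) g) p‖ ^ 2 ∂μ := by
  have hΦ := contDiff_quadraticPhase σ r hγ
  rw [← integral_const_mul]
  refine integral_le_of_le_commutatorDensity hΦ hg hgc _ _
    ((integrable_norm_expWeight_sq hΦ.continuous hg.continuous hgc).const_mul _) fun p => ?_
  exact le_commutatorDensity_quadraticPhase b hγ hc hσ hcσ (hγ'' p.2)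
    fun hp => hsupp fun hgp => hp (by simp [expWeight, hgp])

end QuadraticPhase

/-! ### The Euclidean case -/

section Euclidean

variable {n : ℕ}

lemma schrodingerOp_prod {g : Euc n × ℝ → ℂ} (hg : ContDiff ℝ ∞ g) (x : Euc n) (t : ℝ) :
    schrodingerOp (0, 1) (fun j => (EuclideanSpace.basisFun (Fin n) ℝ j, 0)) g (x, t) =
      Complex.I * deriv (fun s => g (x, s)) t + lapl (fun y => g (y, t)) x := by
  have hsmooth (j : Fin n) := contDiff_dirDeriv hg (EuclideanSpace.single j 1, 0)
  simp only [schrodingerOp, lapl, EuclideanSpace.basisFun_apply,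
    dirDeriv_zero_one (differentiable_of_smooth hg),
    dirDeriv_mk_zero (differentiable_of_smooth (hsmooth _)),
    dirDeriv_mk_zero (differentiable_of_smooth hg)]

lemma norm_deriv_deriv_smul_const {E : Type*} [NormedAddCommGroup E] [NormedSpace ℝ E]
    {φ : ℝ → ℝ} (hφ : ContDiff ℝ ∞ φ) (v : E) (t : ℝ) :
    ‖deriv (deriv fun s => φ s • v) t‖ = |deriv (deriv φ) t| * ‖v‖ := by
  have hφ' := (contDiff_infty_iff_deriv.1 hφ).2
  simp only [funext fun s => deriv_smul_const (differentiable_of_smooth hφ s) v,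
    deriv_smul_const (differentiable_of_smooth hφ' t) v, norm_smul, norm_eq_abs]

lemma sqrt_cube_mul_inv_pow_four {σ : ℝ} (hσ : 0 ≤ σ) (R : ℝ) :
    √(σ ^ 3 * R⁻¹ ^ 4) = σ ^ ((3 : ℝ) / 2) / R ^ 2 := by
  have hpow : (σ ^ ((3 : ℝ) / 2)) ^ 2 = σ ^ 3 := by
    rw [← rpow_mul_natCast hσ]
    norm_num
  rw [sqrt_eq_iff_eq_sq (by positivity) (by positivity), div_pow, hpow]
  ring

theorem carleman_estimate_general {γ : ℝ → Euc n} {c R σ : ℝ} (hγ : ContDiff ℝ ∞ γ) (hc : 1 ≤ c)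
    (hγ'' : ∀ t, ‖deriv (deriv γ) t‖ ≤ c) (hR : 0 < R) (hσ : c * R ^ 2 ≤ σ)
    {g : Euc n → ℝ → ℂ} (hg : ContDiff ℝ ∞ (fun p : Euc n × ℝ => g p.1 p.2))
    (hgc : HasCompactSupport (fun p : Euc n × ℝ => g p.1 p.2))
    (hsupp : Function.support (fun p : Euc n × ℝ => g p.1 p.2)
      ⊆ {p | 1 ≤ ‖R⁻¹ • p.1 + γ p.2‖}) :
    σ ^ ((3 : ℝ) / 2) / R ^ 2 *
        √(∫ t, ∫ x, (exp (σ * ‖R⁻¹ • x + γ t‖ ^ 2) * ‖g x t‖) ^ 2)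
      ≤ √(∫ t, ∫ x, (exp (σ * ‖R⁻¹ • x + γ t‖ ^ 2) *
          ‖Complex.I * deriv (fun s => g x s) t + lapl (fun y => g y t) x‖) ^ 2) := by
  have hσ0 : 0 ≤ σ := (by positivity : 0 ≤ c * R ^ 2).trans hσ
  have hcσ : c ≤ σ * R⁻¹ ^ 2 := by
    rwa [inv_pow, ← div_eq_mul_inv, le_div_iff₀ (by positivity)]
  have hΦ := (contDiff_quadraticPhase σ R⁻¹ hγ).continuous
  have estimate := integral_norm_expWeight_quadraticPhase_le
    ((volume : Measure (Euc n)).prod volume) (EuclideanSpace.basisFun (Fin n) ℝ) hγ hc hγ'' hσ0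
    hcσ hg hgc hsupp
  rw [integral_prod_symm _ (integrable_norm_expWeight_sq hΦ hg.continuous hgc),
    integral_prod_symm _ (integrable_norm_expWeight_sq hΦ
      (contDiff_schrodingerOp hg _ _).continuous (hasCompactSupport_schrodingerOp hgc _ _))]
    at estimate
  simp only [norm_expWeight, schrodingerOp_prod hg, quadraticPhase, movingPoint] at estimate
  rw [← sqrt_cube_mul_inv_pow_four hσ0, ← sqrt_mul (by positivity)]
  exact sqrt_le_sqrt estimate

end Euclidean

/-- Lemma 2 of the paper (Carleman estimate).  For every smooth `φ : [0,1] → ℝ` with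
`‖φ'‖_∞ + ‖φ''‖_∞ ≤ K` there is a constant `c = c(n, K) > 0` such that for all `R > 0`,
`σ ≥ cR²` and all `g ∈ C₀^∞(ℝⁿ×ℝ)` supported in `ℝⁿ × (0,1)` and in
`{(x,t) : |x/R + φ(t)e₁| ≥ 1}`, one has
`(σ^{3/2}/(cR²)) ‖e^{σ|x/R+φ(t)e₁|²} g‖_{L²} ≤ ‖e^{σ|x/R+φ(t)e₁|²} (i∂ₜ+Δ)g‖_{L²}`. -/
theorem carleman_estimate (n : ℕ) (hn : 0 < n) (K : ℝ) :
    ∃ c : ℝ, 0 < c ∧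
      ∀ φ : ℝ → ℝ, ContDiff ℝ (⊤ : ℕ∞) φ →
        (∀ t : ℝ, |deriv φ t| + |deriv (deriv φ) t| ≤ K) →
        ∀ R : ℝ, 0 < R → ∀ σ : ℝ, c * R ^ 2 ≤ σ →
        ∀ g : Euc n → ℝ → ℂ,
          ContDiff ℝ (⊤ : ℕ∞) (fun p : Euc n × ℝ => g p.1 p.2) →
          HasCompactSupport (fun p : Euc n × ℝ => g p.1 p.2) →
          tsupport (fun p : Euc n × ℝ => g p.1 p.2) ⊆ Set.univ ×ˢ Ioo (0:ℝ) 1 →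
          (Function.support (fun p : Euc n × ℝ => g p.1 p.2) ⊆
            {p : Euc n × ℝ |
              1 ≤ ‖R⁻¹ • p.1 + φ p.2 • EuclideanSpace.single (⟨0, hn⟩ : Fin n) (1:ℝ)‖}) →
          σ ^ ((3:ℝ)/2) / (c * R ^ 2) *
              Real.sqrt (∫ t : ℝ, ∫ x : Euc n,
                (Real.exp (σ * ‖R⁻¹ • x +
                    φ t • EuclideanSpace.single (⟨0, hn⟩ : Fin n) (1:ℝ)‖ ^ 2) *
                  ‖g x t‖) ^ 2)
            ≤ Real.sqrt (∫ t : ℝ, ∫ x : Euc n,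
                (Real.exp (σ * ‖R⁻¹ • x +
                    φ t • EuclideanSpace.single (⟨0, hn⟩ : Fin n) (1:ℝ)‖ ^ 2) *
                  ‖Complex.I * deriv (fun τ => g x τ) t + lapl (fun y => g y t) x‖) ^ 2) := by
  refine ⟨max 1 K, lt_max_of_lt_left one_pos, fun φ hφ hK R hR σ hσ g hg hgc _ hsupp => ?_⟩
  have hσ0 : 0 ≤ σ := (by positivity : 0 ≤ max 1 K * R ^ 2).trans hσ
  have hγ : ContDiff ℝ ∞ fun t => φ t • EuclideanSpace.single (⟨0, hn⟩ : Fin n) (1 : ℝ) :=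
    hφ.smul contDiff_const
  refine le_trans ?_ (carleman_estimate_general hγ (le_max_left 1 K) (fun t => ?_) hR hσ hg hgc
    hsupp)
  · gcongr
    exact le_mul_of_one_le_left (by positivity) (le_max_left 1 K)
  · have hφ'' : |deriv (deriv φ) t| ≤ K := (le_add_of_nonneg_left (abs_nonneg _)).trans (hK t)
    simp [norm_deriv_deriv_smul_const hφ, hφ'']
end
end
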